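/- Let (R,m) be an unmixed generalized Cohen-Macaulay local ring of dimension d > 0 and I a standard parameter ideal. Then for each fixed i ∈ {1,...,d}, depth R ≥ d - i + 1 if and only if eᵢ(I) = 0. -/

import Mathlib

open IsLocalRing Filter Function CategoryTheory

universe u

section Defs

variable (R : Type u) [CommRing R]

/-- The length of a module, as the Krull dimension of its lattice of submodules. -/
noncomputable def mlen (M : Type u) [AddCommGroup M] [Module R M] : WithBot ℕ∞ :=
  Order.krullDim (Submodule R M)

/-- The (Krull) dimension of a module. -/
noncomputable def mdim (M : Type u) [AddCommGroup M] [Module R M] : WithBot ℕ∞ :=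
  ringKrullDim (R ⧸ Module.annihilator R M)

/-- The depth of `M` with respect to an ideal `I`: the supremum of the lengths of
`M`-regular sequences consisting of elements of `I`. -/
noncomputable def idepth (I : Ideal R) (M : Type u) [AddCommGroup M] [Module R M] : ℕ∞ :=
  sSup {n : ℕ∞ | ∃ rs : List R, (rs.length : ℕ∞) = n ∧ (∀ r ∈ rs, r ∈ I) ∧
    RingTheory.Sequence.IsRegular M rs}

/-- The depth of a module over a local ring. -/
noncomputable def mdepth [IsLocalRing R] (M : Type u) [AddCommGroup M] [Module R M] : ℕ∞ :=
  idepth R (maximalIdeal R) M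

/-- A Cohen–Macaulay module over a local ring: depth = dimension. -/
def IsCMMod [IsLocalRing R] (M : Type u) [AddCommGroup M] [Module R M] : Prop :=
  (mdepth R M : WithBot ℕ∞) = mdim R M

/-- A Cohen–Macaulay local ring. -/
def IsCMRing [IsLocalRing R] : Prop := (mdepth R R : WithBot ℕ∞) = ringKrullDim R

/-- A maximal Cohen–Macaulay module: finite with depth = dim R. -/
def IsMCMMod [IsLocalRing R] (M : Type u) [AddCommGroup M] [Module R M] : Prop :=
  Module.Finite R M ∧ (mdepth R M : WithBot ℕ∞) = ringKrullDim R

/-- `H⁰_m(M)`: the submodule of elements killed by a power of the maximal ideal. -/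
def H0 [IsLocalRing R] (M : Type u) [AddCommGroup M] [Module R M] : Submodule R M :=
  ⨆ n : ℕ, Submodule.torsionBySet R M ((maximalIdeal R ^ n : Ideal R) : Set R)

/-- The `i`-th local cohomology of `M` with support in the maximal ideal. -/
noncomputable def lcoh [IsLocalRing R] (i : ℕ) (M : Type u) [AddCommGroup M] [Module R M] :
    ModuleCat.{u} R :=
  (localCohomology (maximalIdeal R) i).obj (ModuleCat.of R M)

/-- The value at `n` of the Hilbert–Samuel polynomial in dimension `d` with coefficients
`e 0, …, e d`:  `∑ (-1)^i eᵢ C(n+d-1-i, d-i)`. -/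
def hsPoly (d : ℕ) (e : ℕ → ℤ) (n : ℕ) : ℤ :=
  ∑ i ∈ Finset.range (d + 1), (-1 : ℤ) ^ i * e i * ((n + d - 1 - i).choose (d - i) : ℤ)

/-- `I` is a parameter ideal for `M` of dimension `d`: generated by `d` elements with
`M/IM` of finite length. -/
def IsParameterIdeal [IsLocalRing R] (I : Ideal R) (d : ℕ) (M : Type u) [AddCommGroup M]
    [Module R M] : Prop :=
  (∃ a : Fin d → R, I = Ideal.span (Set.range a)) ∧ mlen R (M ⧸ (I • (⊤ : Submodule R M))) < ⊤

/-- `ℓ` records the Hilbert–Samuel function of `I` on `M`:  `ℓ n = λ(M/IⁿM)`. -/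
def IsHilbSeq (I : Ideal R) (M : Type u) [AddCommGroup M] [Module R M] (ℓ : ℕ → ℕ) : Prop :=
  ∀ n : ℕ, mlen R (M ⧸ (I ^ n • (⊤ : Submodule R M))) = ((ℓ n : ℕ∞) : WithBot ℕ∞)

/-- `e 0, …, e d` are the Hilbert coefficients of `I` on `M`: the Hilbert–Samuel function
eventually agrees with the Hilbert–Samuel polynomial with these coefficients. -/
def HasHilbCoeffs (I : Ideal R) (M : Type u) [AddCommGroup M] [Module R M] (d : ℕ)
    (e : ℕ → ℤ) : Prop :=
  ∃ ℓ : ℕ → ℕ, IsHilbSeq R I M ℓ ∧ ∀ᶠ n in atTop, (ℓ n : ℤ) = hsPoly d e n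

/-- A local ring is unmixed if every associated prime of its completion has
dimension equal to `dim R`. -/
def Unmixed [IsLocalRing R] : Prop :=
  ∀ p ∈ associatedPrimes (AdicCompletion (maximalIdeal R) R)
      (AdicCompletion (maximalIdeal R) R),
    ringKrullDim ((AdicCompletion (maximalIdeal R) R) ⧸ p) = ringKrullDim R

/-- The height of an ideal: the infimum of the heights of the primes containing it. -/
noncomputable def idealHeight (I : Ideal R) : ℕ∞ :=
  ⨅ p ∈ {p : PrimeSpectrum R | I ≤ p.asIdeal}, Order.height p

/-- A regular local ring: the maximal ideal is generated by `dim R` elements. -/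
def IsRegularLocal [IsLocalRing R] : Prop :=
  ∃ s : Finset R, Ideal.span (s : Set R) = maximalIdeal R ∧
    ((s.card : ℕ∞) : WithBot ℕ∞) = ringKrullDim R

end Defs
/-- The binomial coefficient `C(i-1, j-1)` with the conventions `C(-1,-1) = 1` and
`C(i-1,-1) = 0` for `i ≥ 1`. -/
def bin (i j : ℕ) : ℕ :=
  if i = 0 then (if j = 0 then 1 else 0)
  else if j = 0 then 0 else (i - 1).choose (j - 1)

/-!
Let `h_i = λ(Hⁱ_m(M))`, let `I = (b₀, …, b_{d-1})` and put `M̄ = M / H⁰_m(M)`. Prime avoidance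
gives `x ∈ b₀ + (b₁, …, b_{d-1})` regular on `M̄`, and `N = M̄ / x M̄` satisfies
`λ(Hⁱ_m(N)) ≤ λ(Hⁱ_m(M̄)) + λ(Hⁱ⁺¹_m(M̄))`. By Artin–Rees the kernels `(Iⁿ⁺¹M̄ : x) / IⁿM̄` grow
with lower order than the Hilbert function, so induction on `d` yields
`e₀(I, M) ≥ λ(M / I M) - ∑_{i < d} C(d - 1, i) h_i`.

A standard parameter ideal attains this bound, so every inequality on the way is an equality:
`H⁰_m(M) ∩ I M = 0`, and the generators form a relatively regular sequence, which forces
`xM̄ ∩ Iⁿ⁺¹M̄ = x IⁿM̄`. The Hilbert function of `M` is then `h₀` plus the sum function of that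
of `N`, and induction gives Schenzel's formula `(-1)^(d-k) e_{d-k} = ∑_j C(k-1, j-1) h_j` for
`k < d`.

An unmixed ring of positive dimension has `h₀ = 0`. The remaining binomial coefficients in
Schenzel's formula are positive, so `e_i = 0` means `h_j = 0` for all `j ≤ d - i`, that is,
`depth ≥ d - i + 1`. Depth and local cohomology are compared by writing `Hⁱ_m(M)` as the direct
limit of `Extⁱ(R / mⁿ, M)`.
-/

noncomputable section

namespace HilbertCoefficients

open Limits

/-! ### Comparison of the two `Ext` groups -/

section ExtComparison

variable {R : Type u} [CommRing R] {X X' : ModuleCat.{u} R}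

/-- The complex `Hom(P, Y)` whose cohomology computes `Ext(X, Y)`, for a projective resolution `P`
of `X`. -/
abbrev homComplex (P : ProjectiveResolution X) (Y : ModuleCat.{u} R) :
    CochainComplex (ModuleCat.{u} R) ℕ :=
  P.complex.linearYonedaObj R Y

section

variable (P : ProjectiveResolution X) (Y : ModuleCat.{u} R) (n : ℕ)

/-- The inclusion of the `n`-cocycles of `Hom(P, Y)` into `Hom(Pₙ, Y)`. -/
def cocycleInclusion : (homComplex P Y).cycles n →ₗ[R] (P.complex.X n ⟶ Y) :=
  ((homComplex P Y).iCycles n).hom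

theorem cocycleInclusion_injective : Injective (cocycleInclusion P Y n) :=
  (ModuleCat.mono_iff_injective ((homComplex P Y).iCycles n)).1 inferInstance

theorem d_comp_cocycleInclusion (z : (homComplex P Y).cycles n) :
    P.complex.d (n + 1) n ≫ cocycleInclusion P Y n z = 0 :=
  congrArg (fun f => f.hom z) ((homComplex P Y).iCycles_d n (n + 1))

/-- The class of a cocycle of `Hom(P, Y)` in `Abelian.Ext`. -/
def cocycleToExt : (homComplex P Y).cycles n →ₗ[R] Abelian.Ext.{u} X Y n where
  toFun z := P.extMk (cocycleInclusion P Y n z) (n + 1) rfl (d_comp_cocycleInclusion P Y n z)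
  map_add' a b := by
    rw [P.add_extMk]
    congr 1
    exact map_add _ _ _
  map_smul' r a := by
    rw [RingHom.id_apply, Abelian.Ext.smul_eq_comp_mk₀, P.extMk_comp_mk₀]
    congr 1
    rw [map_smul, Linear.comp_smul, Category.comp_id]

theorem cocycleToExt_apply (z : (homComplex P Y).cycles n) :
    cocycleToExt P Y n z =
      P.extMk (cocycleInclusion P Y n z) (n + 1) rfl (d_comp_cocycleInclusion P Y n z) :=
  rfl

theorem cocycleToExt_surjective : Surjective (cocycleToExt P Y n) := by
  intro ξ
  obtain ⟨f, hf, rfl⟩ := P.extMk_surjective ξ (n + 1) rfl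
  let z : (homComplex P Y).cycles n := (homComplex P Y).cyclesMk (i := n) f (n + 1) (by simp) hf
  have hz : cocycleInclusion P Y n z = f :=
    (homComplex P Y).i_cyclesMk (i := n) f (n + 1) (by simp) hf
  refine ⟨z, ?_⟩
  rw [cocycleToExt_apply]
  congr 1

theorem cocycleInclusion_toCycles (g : P.complex.X n ⟶ Y) :
    cocycleInclusion P Y (n + 1) (((homComplex P Y).toCycles n (n + 1)).hom g) =
      P.complex.d (n + 1) n ≫ g :=
  congrArg (fun f => f.hom g) ((homComplex P Y).toCycles_i n (n + 1))

theorem homologyπ_succ_eq_zero_iff (z : (homComplex P Y).cycles (n + 1)) :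
    ((homComplex P Y).homologyπ (n + 1)).hom z = 0 ↔
      ∃ g : P.complex.X n ⟶ Y, P.complex.d (n + 1) n ≫ g = cocycleInclusion P Y (n + 1) z := by
  have exact_toCycles : (ShortComplex.mk ((homComplex P Y).toCycles n (n + 1))
      ((homComplex P Y).homologyπ (n + 1)) (by simp)).Exact :=
    ShortComplex.exact_of_g_is_cokernel _ ((homComplex P Y).homologyIsCokernel n (n + 1) (by simp))
  rw [ShortComplex.moduleCat_exact_iff] at exact_toCycles
  constructor
  · intro hz
    obtain ⟨g, rfl⟩ := exact_toCycles z hz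
    exact ⟨g, (cocycleInclusion_toCycles P Y n g).symm⟩
  · rintro ⟨g, hg⟩
    rw [← cocycleInclusion_toCycles] at hg
    rw [← cocycleInclusion_injective P Y (n + 1) hg]
    exact congrArg (fun f => f.hom g) ((homComplex P Y).toCycles_comp_homologyπ n (n + 1))

theorem eq_zero_of_extMk_eq_zero (f : P.complex.X 0 ⟶ Y) (hf : P.complex.d 1 0 ≫ f = 0)
    (h : P.extMk f 1 rfl hf = 0) : f = 0 := by
  rw [← P.extEquivCohomologyClass.apply_eq_iff_eq,
    ProjectiveResolution.extEquivCohomologyClass_extMk,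
    ProjectiveResolution.extEquivCohomologyClass_zero,
    CochainComplex.HomComplex.CohomologyClass.mk_eq_zero_iff,
    CochainComplex.HomComplex.Cocycle.toSingleMk_mem_coboundaries_iff _ _ _ _ _ 1 (by simp)] at h
  obtain ⟨g, hg⟩ := h
  have source_isZero : IsZero (P.cochainComplex.X 1) :=
    HomologicalComplex.isZero_extend_X _ _ _ fun i => by simp; lia
  rw [source_isZero.eq_of_src g 0, comp_zero] at hg
  rw [← cancel_epi (P.cochainComplexXIso (-(0 : ℕ)) 0 rfl).hom, ← hg, comp_zero]

theorem cocycleToExt_eq_zero_iff (z : (homComplex P Y).cycles n) :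
    cocycleToExt P Y n z = 0 ↔ ((homComplex P Y).homologyπ n).hom z = 0 := by
  rcases n with _ | n
  · have homologyπ_injective : Injective ((homComplex P Y).homologyπ 0).hom :=
      (ModuleCat.mono_iff_injective _).1 (by
        have := (homComplex P Y).isIso_homologyπ₀
        infer_instance)
    have cocycleToExt_injective : Injective (cocycleToExt P Y 0) :=
      (injective_iff_map_eq_zero _).2 fun z hz => cocycleInclusion_injective P Y 0 <| by
        rw [eq_zero_of_extMk_eq_zero P Y _ (d_comp_cocycleInclusion P Y 0 z) hz, map_zero]
    rw [map_eq_zero_iff _ cocycleToExt_injective, map_eq_zero_iff _ homologyπ_injective]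
  · rw [homologyπ_succ_eq_zero_iff, cocycleToExt_apply]
    exact P.extMk_eq_zero_iff _ _ _ _ n rfl

end

/-- `Ext` as a left derived functor of the linear Yoneda functor, in terms of which local cohomology
is defined. -/
abbrev DerivedExt (X Y : ModuleCat.{u} R) (n : ℕ) : ModuleCat.{u} R :=
  ((Ext R (ModuleCat.{u} R) n).obj (.op X)).obj Y

/-- The contravariant functoriality of `DerivedExt`. -/
def derivedExtMap (g : X' ⟶ X) (Y : ModuleCat.{u} R) (n : ℕ) :
    DerivedExt X Y n →ₗ[R] DerivedExt X' Y n :=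
  (((Ext R (ModuleCat.{u} R) n).map g.op).app Y).hom

section

variable (P : ProjectiveResolution X) (Y : ModuleCat.{u} R) (n : ℕ)

/-- The class of a cocycle of `Hom(P, Y)` in `DerivedExt`. -/
def cocycleToDerivedExt : (homComplex P Y).cycles n →ₗ[R] DerivedExt X Y n :=
  ((homComplex P Y).homologyπ n ≫ (P.isoExt n Y).inv).hom

theorem cocycleToDerivedExt_surjective : Surjective (cocycleToDerivedExt P Y n) :=
  (ModuleCat.epi_iff_surjective ((homComplex P Y).homologyπ n ≫ (P.isoExt n Y).inv)).1 inferInstance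

theorem ker_cocycleToDerivedExt :
    LinearMap.ker (cocycleToDerivedExt P Y n) = LinearMap.ker (cocycleToExt P Y n) := by
  ext z
  have isoExt_injective : Injective (P.isoExt (R := R) n Y).inv.hom :=
    (ModuleCat.mono_iff_injective _).1 inferInstance
  rw [LinearMap.mem_ker, LinearMap.mem_ker, cocycleToExt_eq_zero_iff]
  exact map_eq_zero_iff _ isoExt_injective

/-- The comparison of the two `Ext` groups through a given projective resolution. -/
def derivedExtEquivOfResolution : DerivedExt X Y n ≃ₗ[R] Abelian.Ext.{u} X Y n :=
  ((cocycleToDerivedExt P Y n).quotKerEquivOfSurjective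
      (cocycleToDerivedExt_surjective P Y n)).symm ≪≫ₗ
    Submodule.quotEquivOfEq _ _ (ker_cocycleToDerivedExt P Y n) ≪≫ₗ
    (cocycleToExt P Y n).quotKerEquivOfSurjective (cocycleToExt_surjective P Y n)

theorem derivedExtEquivOfResolution_cocycleToDerivedExt (z : (homComplex P Y).cycles n) :
    derivedExtEquivOfResolution P Y n (cocycleToDerivedExt P Y n z) = cocycleToExt P Y n z := by
  have : ((cocycleToDerivedExt P Y n).quotKerEquivOfSurjective
      (cocycleToDerivedExt_surjective P Y n)).symm (cocycleToDerivedExt P Y n z) =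
        Submodule.Quotient.mk z := by
    rw [LinearEquiv.symm_apply_eq]
    rfl
  simp only [derivedExtEquivOfResolution, LinearEquiv.trans_apply, this]
  rfl

end

variable {P : ProjectiveResolution X} {P' : ProjectiveResolution X'}

/-- The map `Hom(P, Y) ⟶ Hom(P', Y)` induced by a chain map `P' ⟶ P`. -/
def homComplexMap (φ : P'.complex ⟶ P.complex) (Y : ModuleCat.{u} R) :
    homComplex P Y ⟶ homComplex P' Y :=
  (HomologicalComplex.unopFunctor _ _).map
    ((((linearYoneda R (ModuleCat.{u} R)).obj Y).rightOp.mapHomologicalComplex _).map φ).op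

theorem cocycleInclusion_cyclesMap (φ : P'.complex ⟶ P.complex) (Y : ModuleCat.{u} R) (n : ℕ)
    (z : (homComplex P Y).cycles n) :
    cocycleInclusion P' Y n ((HomologicalComplex.cyclesMap (homComplexMap φ Y) n).hom z) =
      φ.f n ≫ cocycleInclusion P Y n z :=
  congrArg (fun f => f.hom z) (HomologicalComplex.cyclesMap_i (homComplexMap φ Y) n)

variable {g : X' ⟶ X} (φ : ProjectiveResolution.Hom P' P g) (Y : ModuleCat.{u} R) (n : ℕ)

theorem isoExt_inv_naturality :
    (P.isoExt n Y).inv ≫ ((Ext R (ModuleCat.{u} R) n).map g.op).app Y =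
      HomologicalComplex.homologyMap (homComplexMap φ.hom Y) n ≫ (P'.isoExt n Y).inv := by
  let F := ((linearYoneda R (ModuleCat.{u} R)).obj Y).rightOp
  have derived_naturality := congrArg Quiver.Hom.unop <|
    ProjectiveResolution.isoLeftDerivedObj_hom_naturality g P' P φ.hom
      φ.hom_f_zero_comp_π_f_zero F n
  have homology_naturality := congrArg Quiver.Hom.unop <|
    HomologicalComplex.homologyOp_hom_naturality (homComplexMap φ.hom Y) n
  let K := (F.mapHomologicalComplex _).obj P.complex
  calc _ = (HomologicalComplex.homologyUnop K n).hom ≫ _ := Category.assoc _ _ _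
    _ = _ := congrArg (_ ≫ ·) derived_naturality
    _ = _ := (Category.assoc _ _ _).symm
    _ = _ := congrArg (· ≫ (P'.isoLeftDerivedObj F n).hom.unop) homology_naturality
    _ = _ := Category.assoc _ _ _

theorem derivedExtMap_cocycleToDerivedExt (z : (homComplex P Y).cycles n) :
    derivedExtMap g Y n (cocycleToDerivedExt P Y n z) =
      cocycleToDerivedExt P' Y n
        ((HomologicalComplex.cyclesMap (homComplexMap φ.hom Y) n).hom z) := by
  have naturality : ((homComplex P Y).homologyπ n ≫ (P.isoExt n Y).inv) ≫
        ((Ext R (ModuleCat.{u} R) n).map g.op).app Y =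
      HomologicalComplex.cyclesMap (homComplexMap φ.hom Y) n ≫
        ((homComplex P' Y).homologyπ n ≫ (P'.isoExt n Y).inv) := by
    rw [Category.assoc, isoExt_inv_naturality φ, ← Category.assoc, ← Category.assoc,
      HomologicalComplex.homologyπ_naturality]
  exact congrArg (fun f => f.hom z) naturality

theorem mk₀_comp_cocycleToExt (z : (homComplex P Y).cycles n) :
    (Abelian.Ext.mk₀ g).comp (cocycleToExt P Y n z) (zero_add _) =
      cocycleToExt P' Y n ((HomologicalComplex.cyclesMap (homComplexMap φ.hom Y) n).hom z) := by
  rw [cocycleToExt_apply, cocycleToExt_apply, ProjectiveResolution.mk₀_comp_extMk _ _ _ _ φ]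
  congr 1
  rw [cocycleInclusion_cyclesMap]

/-- The comparison of the two `Ext` groups, natural in the first argument. -/
def derivedExtEquiv (X Y : ModuleCat.{u} R) (n : ℕ) :
    DerivedExt X Y n ≃ₗ[R] Abelian.Ext.{u} X Y n :=
  derivedExtEquivOfResolution (projectiveResolution X) Y n

theorem derivedExtEquiv_derivedExtMap (g : X' ⟶ X) (Y : ModuleCat.{u} R) (n : ℕ)
    (ξ : DerivedExt X Y n) :
    derivedExtEquiv X' Y n (derivedExtMap g Y n ξ) =
      (Abelian.Ext.mk₀ g).comp (derivedExtEquiv X Y n ξ) (zero_add _) := by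
  obtain ⟨z, rfl⟩ := cocycleToDerivedExt_surjective (projectiveResolution X) Y n ξ
  let φ : ProjectiveResolution.Hom (projectiveResolution X') (projectiveResolution X) g :=
    ⟨ProjectiveResolution.lift g _ _, by
      rw [← HomologicalComplex.comp_f, ProjectiveResolution.lift_commutes]
      rfl⟩
  rw [derivedExtMap_cocycleToDerivedExt φ, derivedExtEquiv, derivedExtEquiv,
    derivedExtEquivOfResolution_cocycleToDerivedExt,
    derivedExtEquivOfResolution_cocycleToDerivedExt, mk₀_comp_cocycleToExt φ]

end ExtComparison

/-! ### Local cohomology as a direct limit of `Ext` modules -/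

section DirectLimit

variable {R : Type u} [CommRing R] (J : Ideal R)

/-- The projection `R / J ^ b ⟶ R / J ^ a` for `a ≤ b`. -/
def quotPowMap {a b : ℕ} (h : a ≤ b) : ModuleCat.of R (R ⧸ J ^ b) ⟶ ModuleCat.of R (R ⧸ J ^ a) :=
  ModuleCat.ofHom (Submodule.factor (Ideal.pow_le_pow_right h))

theorem quotPowMap_self (a : ℕ) : quotPowMap J (le_refl a) = 𝟙 _ := by
  refine ModuleCat.hom_ext (LinearMap.ext fun x => ?_)
  obtain ⟨x, rfl⟩ := Submodule.Quotient.mk_surjective _ x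
  rfl

theorem quotPowMap_comp {a b c : ℕ} (hab : a ≤ b) (hbc : b ≤ c) :
    quotPowMap J hbc ≫ quotPowMap J hab = quotPowMap J (hab.trans hbc) := by
  refine ModuleCat.hom_ext (LinearMap.ext fun x => ?_)
  obtain ⟨x, rfl⟩ := Submodule.Quotient.mk_surjective _ x
  rfl

variable (i : ℕ) (M : ModuleCat.{u} R)

/-- The transition map `Extⁱ(R / J ^ a, M) → Extⁱ(R / J ^ b, M)` for `a ≤ b`. -/
def extTransition (a b : ℕ) (h : a ≤ b) :
    Abelian.Ext.{u} (ModuleCat.of R (R ⧸ J ^ a)) M i →ₗ[R]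
      Abelian.Ext.{u} (ModuleCat.of R (R ⧸ J ^ b)) M i :=
  Abelian.Ext.bilinearCompOfLinear R _ _ _ 0 i i (zero_add _) (Abelian.Ext.mk₀ (quotPowMap J h))

theorem extTransition_apply {a b : ℕ} (h : a ≤ b)
    (ξ : Abelian.Ext.{u} (ModuleCat.of R (R ⧸ J ^ a)) M i) :
    extTransition J i M a b h ξ = (Abelian.Ext.mk₀ (quotPowMap J h)).comp ξ (zero_add _) :=
  rfl

instance : DirectedSystem (fun n : ℕ => Abelian.Ext.{u} (ModuleCat.of R (R ⧸ J ^ n)) M i)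
    (fun a b h => extTransition J i M a b h) where
  map_self a ξ := by
    rw [extTransition_apply, quotPowMap_self, Abelian.Ext.mk₀_id_comp]
  map_map a b c hab hbc ξ := by
    rw [extTransition_apply, extTransition_apply, extTransition_apply,
      Abelian.Ext.mk₀_comp_mk₀_assoc, quotPowMap_comp]

/-- The local cohomology `Hⁱ_J(M)` as the direct limit of the modules `Extⁱ(R / J ^ n, M)`. -/
abbrev LimExt : Type u :=
  Module.DirectLimit (fun n : ℕ => Abelian.Ext.{u} (ModuleCat.of R (R ⧸ J ^ n)) M i)
    (extTransition J i M)

/-- The structure map from `Extⁱ(R / J ^ n, M)` to the direct limit. -/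
abbrev limExtOf (n : ℕ) :
    Abelian.Ext.{u} (ModuleCat.of R (R ⧸ J ^ n)) M i →ₗ[R] LimExt J i M :=
  Module.DirectLimit.of R ℕ (fun n : ℕ => Abelian.Ext.{u} (ModuleCat.of R (R ⧸ J ^ n)) M i)
    (extTransition J i M) n

/-- The colimit cocone defining Mathlib's `localCohomology`, evaluated at `M`. -/
def localCohomologyCocone :=
  ((evaluation _ _).obj M).mapCocone
    (colimit.cocone (localCohomology.diagram (localCohomology.idealPowersDiagram J) i))

/-- Evaluation at `M` preserves colimits. -/
def isColimitLocalCohomologyCocone : IsColimit (localCohomologyCocone J i M) :=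
  isColimitOfPreserves _ (colimit.isColimit _)

instance : PreservesFilteredColimitsOfSize.{0, 0} (forget (ModuleCat.{u} R)) :=
  preservesSmallestFilteredColimits_of_preservesFilteredColimits.{u, u} _

/-- The structure map from `DerivedExt` of `R / J ^ n` to Mathlib's `localCohomology`. -/
def derivedExtToLocalCohomology (n : ℕ) :
    DerivedExt (ModuleCat.of R (R ⧸ J ^ n)) M i →ₗ[R] (localCohomology J i).obj M :=
  ((localCohomologyCocone J i M).ι.app (.op (.op n))).hom

theorem derivedExtToLocalCohomology_derivedExtMap {a b : ℕ} (h : a ≤ b)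
    (ξ : DerivedExt (ModuleCat.of R (R ⧸ J ^ a)) M i) :
    derivedExtToLocalCohomology J i M b (derivedExtMap (quotPowMap J h) M i ξ) =
      derivedExtToLocalCohomology J i M a ξ :=
  congrArg (fun f => f.hom ξ) <| (localCohomologyCocone J i M).w
    (show (Opposite.op (Opposite.op a) : ℕᵒᵖᵒᵖ) ⟶ Opposite.op (Opposite.op b) from
      (homOfLE h).op.op)

theorem exists_derivedExtToLocalCohomology_eq (z : (localCohomology J i).obj M) :
    ∃ n ξ, derivedExtToLocalCohomology J i M n ξ = z := by
  obtain ⟨n, ξ, hξ⟩ :=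
    Concrete.isColimit_exists_rep _ (isColimitLocalCohomologyCocone J i M) z
  exact ⟨n.unop.unop, ξ, hξ⟩

theorem exists_map_eq_zero_of_ι_eq_zero {K : Type} [SmallCategory K] [IsFiltered K]
    {F : K ⥤ ModuleCat.{u} R} {D : Cocone F} (hD : IsColimit D) {j : K} {x : F.obj j}
    (hx : (D.ι.app j).hom x = 0) : ∃ (k : K) (f : j ⟶ k), (F.map f).hom x = 0 := by
  obtain ⟨k, f, g, h⟩ := Concrete.isColimit_exists_of_rep_eq F hD x (0 : F.obj j)
    (hx.trans (map_zero (D.ι.app j).hom).symm)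
  exact ⟨k, f, h.trans (map_zero (F.map g).hom)⟩

theorem exists_derivedExtMap_eq_zero {a : ℕ} {ξ : DerivedExt (ModuleCat.of R (R ⧸ J ^ a)) M i}
    (hξ : derivedExtToLocalCohomology J i M a ξ = 0) :
    ∃ (b : ℕ) (h : a ≤ b), derivedExtMap (quotPowMap J h) M i ξ = 0 := by
  obtain ⟨k, f, h⟩ := exists_map_eq_zero_of_ι_eq_zero (isColimitLocalCohomologyCocone J i M)
    (j := .op (.op a)) hξ
  exact ⟨k.unop.unop, leOfHom f.unop.unop, h⟩

/-- The map from the direct limit of the `Abelian.Ext` modules to Mathlib's `localCohomology`. -/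
def limExtToLocalCohomology : LimExt J i M →ₗ[R] (localCohomology J i).obj M :=
  Module.DirectLimit.lift R ℕ _ _
    (fun n => derivedExtToLocalCohomology J i M n ∘ₗ (derivedExtEquiv _ M i).symm.toLinearMap) <| by
      intro a b h x
      obtain ⟨y, rfl⟩ := (derivedExtEquiv _ M i).surjective x
      simp only [LinearMap.coe_comp, comp_apply, LinearEquiv.coe_coe, LinearEquiv.symm_apply_apply]
      rw [extTransition_apply, ← derivedExtEquiv_derivedExtMap, LinearEquiv.symm_apply_apply,
        derivedExtToLocalCohomology_derivedExtMap]

theorem limExtToLocalCohomology_limExtOf (n : ℕ)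
    (ξ : DerivedExt (ModuleCat.of R (R ⧸ J ^ n)) M i) :
    limExtToLocalCohomology J i M (limExtOf J i M n (derivedExtEquiv _ M i ξ)) =
      derivedExtToLocalCohomology J i M n ξ := by
  rw [limExtToLocalCohomology, Module.DirectLimit.lift_of]
  simp

theorem limExtToLocalCohomology_bijective : Bijective (limExtToLocalCohomology J i M) := by
  constructor
  · rw [injective_iff_map_eq_zero]
    intro z hz
    obtain ⟨n, x, rfl⟩ := Module.DirectLimit.exists_of z
    obtain ⟨ξ, rfl⟩ := (derivedExtEquiv _ M i).surjective x
    rw [limExtToLocalCohomology_limExtOf] at hz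
    obtain ⟨b, h, hb⟩ := exists_derivedExtMap_eq_zero J i M hz
    rw [← Module.DirectLimit.of_f (hij := h), extTransition_apply, ← derivedExtEquiv_derivedExtMap,
      hb, map_zero, map_zero]
  · intro z
    obtain ⟨n, ξ, rfl⟩ := exists_derivedExtToLocalCohomology_eq J i M z
    exact ⟨_, limExtToLocalCohomology_limExtOf J i M n ξ⟩

/-- Local cohomology in Mathlib's definition is the direct limit of the `Abelian.Ext` modules. -/
def limExtEquiv : LimExt J i M ≃ₗ[R] (localCohomology J i).obj M :=
  LinearEquiv.ofBijective _ (limExtToLocalCohomology_bijective J i M)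

/-- The length of the local cohomology `Hⁱ_J(M)`. -/
def lcLength (M : Type u) [AddCommGroup M] [Module R M] : ℕ∞ :=
  Module.length R (LimExt J i (ModuleCat.of R M))

theorem mlen_lcoh [IsLocalRing R] (M : Type u) [AddCommGroup M] [Module R M] :
    mlen R (lcoh R i M) = (lcLength (maximalIdeal R) i M : WithBot ℕ∞) := by
  rw [mlen, ← Module.coe_length, lcLength, (limExtEquiv _ i _).length_eq]
  rfl

end DirectLimit

/-! ### Vanishing on torsion modules and the long exact sequence -/

section Torsion

variable {R : Type u} [CommRing R]

theorem mk₀_comp_extClass_comp_eq_zero {S S' : ShortComplex (ModuleCat.{u} R)} (hS : S.ShortExact)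
    (hS' : S'.ShortExact) (φ : S' ⟶ S) {T : ModuleCat.{u} R} {i j : ℕ}
    {η : Abelian.Ext.{u} S.X₁ T i} (hη : (Abelian.Ext.mk₀ φ.τ₁).comp η (zero_add _) = 0)
    (hj : 1 + i = j) :
    (Abelian.Ext.mk₀ φ.τ₃).comp (hS.extClass.comp η hj) (zero_add _) = 0 := by
  rw [← Abelian.Ext.comp_assoc _ _ _ (zero_add 1) hj (by omega),
    ← ShortComplex.ShortExact.extClass_naturality hS' hS φ,
    Abelian.Ext.comp_assoc (a₂₃ := i) _ _ _ (add_zero 1) (zero_add i) (by omega), hη,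
    Abelian.Ext.comp_zero]

section

variable {F K F' K' : Type u} [AddCommGroup F] [Module R F] [AddCommGroup K] [Module R K]
  [AddCommGroup F'] [Module R F'] [AddCommGroup K'] [Module R K']
  {p : F →ₗ[R] K} {p' : F' →ₗ[R] K'} {a : F' →ₗ[R] F} {b : K' →ₗ[R] K}

theorem apply_mem_ker_of_comm (comm : p ∘ₗ a = b ∘ₗ p') {x : F'} (hx : x ∈ LinearMap.ker p') :
    a x ∈ LinearMap.ker p := by
  rw [LinearMap.mem_ker, ← LinearMap.comp_apply, comm, LinearMap.comp_apply, hx, map_zero]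

/-- The morphism between the short complexes of kernels induced by a commutative square. -/
def shortComplexKerMap (comm : p ∘ₗ a = b ∘ₗ p') : p'.shortComplexKer ⟶ p.shortComplexKer where
  τ₁ := ModuleCat.ofHom (a.restrict fun _ => apply_mem_ker_of_comm comm)
  τ₂ := ModuleCat.ofHom a
  τ₃ := ModuleCat.ofHom b
  comm₁₂ := ModuleCat.hom_ext (LinearMap.ext fun _ => rfl)
  comm₂₃ := ModuleCat.hom_ext comm

end

section

variable (J : Ideal R) (T : Type u) [AddCommGroup T] [Module R T]

/-- Every class in `Extⁱ(K, T)` vanishes on some submodule `J ^ N K` of `K`. -/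
def ExtVanishesOnPowers (K : Type u) [AddCommGroup K] [Module R K] (i : ℕ) : Prop :=
  ∀ ξ : Abelian.Ext.{u} (ModuleCat.of R K) (ModuleCat.of R T) i, ∃ N : ℕ,
    (Abelian.Ext.mk₀ (ModuleCat.ofHom (J ^ N • (⊤ : Submodule R K)).subtype)).comp ξ
      (zero_add _) = 0

variable {J T}

theorem ExtVanishesOnPowers.exists_forall_comp_eq_zero {F K : Type u} [AddCommGroup F] [Module R F]
    [Module.Free R F] [AddCommGroup K] [Module R K] {p : F →ₗ[R] K} (hp : Surjective p) {i : ℕ}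
    (vanishes : ExtVanishesOnPowers J T (LinearMap.ker p) i)
    (ξ : Abelian.Ext.{u} (ModuleCat.of R K) (ModuleCat.of R T) (i + 1)) :
    ∃ N : ℕ, ∀ (F' K' : Type u) [AddCommGroup F'] [Module R F'] [AddCommGroup K'] [Module R K']
      (p' : F' →ₗ[R] K') (a : F' →ₗ[R] F) (b : K' →ₗ[R] K), Surjective p' → p ∘ₗ a = b ∘ₗ p' →
      (∀ z ∈ LinearMap.ker p', a z ∈ J ^ N • LinearMap.ker p) →
      (Abelian.Ext.mk₀ (ModuleCat.ofHom b)).comp ξ (zero_add _) = 0 := by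
  have hS := LinearMap.shortExact_shortComplexKer hp
  have : Projective (ModuleCat.of R F) :=
    ModuleCat.projective_of_free (Module.Free.chooseBasis R F)
  obtain ⟨η, rfl⟩ := Abelian.Ext.contravariant_sequence_exact₃ hS (ModuleCat.of R T) ξ
    (Abelian.Ext.eq_zero_of_projective (P := ModuleCat.of R F) _) (n₀ := i) (by omega)
  obtain ⟨N, hN⟩ := vanishes η
  refine ⟨N, fun F' K' _ _ _ _ p' a b hp' comm ha => ?_⟩
  refine mk₀_comp_extClass_comp_eq_zero hS (LinearMap.shortExact_shortComplexKer hp')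
    (shortComplexKerMap comm) ?_ (by omega)
  have restrict_mem (z : LinearMap.ker p') :
      a.restrict (fun _ => apply_mem_ker_of_comm comm) z ∈
        J ^ N • (⊤ : Submodule R (LinearMap.ker p)) := by
    have hz := ha z.1 z.2
    rw [← Submodule.range_subtype (LinearMap.ker p), ← Submodule.map_top,
      ← Submodule.map_smul''] at hz
    obtain ⟨y, hy, hyz⟩ := hz
    rwa [← show y = a.restrict (fun _ => apply_mem_ker_of_comm comm) z from Subtype.ext hyz]
  have factorization : (shortComplexKerMap comm).τ₁ =
      ModuleCat.ofHom (LinearMap.codRestrict _ _ restrict_mem) ≫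
        ModuleCat.ofHom (J ^ N • (⊤ : Submodule R (LinearMap.ker p))).subtype := rfl
  rw [factorization, ← Abelian.Ext.mk₀_comp_mk₀_assoc, hN, Abelian.Ext.comp_zero]

theorem extVanishesOnPowers_zero {c : ℕ} (hT : J ^ c • (⊤ : Submodule R T) = ⊥) (K : Type u)
    [AddCommGroup K] [Module R K] : ExtVanishesOnPowers J T K 0 := by
  intro ξ
  refine ⟨c, ?_⟩
  rw [← Abelian.Ext.mk₀_homEquiv₀_apply ξ, Abelian.Ext.mk₀_comp_mk₀, Abelian.Ext.mk₀_eq_zero_iff]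
  refine ModuleCat.hom_ext (LinearMap.ext fun x => ?_)
  have := Submodule.smul_mono (le_refl (J ^ c)) (le_top (a := Submodule.map _ ⊤)) <|
    Submodule.map_smul'' (J ^ c) ⊤ (Abelian.Ext.homEquiv₀ ξ).hom ▸ Submodule.mem_map_of_mem x.2
  rwa [hT] at this

theorem extVanishesOnPowers [IsNoetherianRing R] {c : ℕ} (hT : J ^ c • (⊤ : Submodule R T) = ⊥)
    (i : ℕ) (K : Type u) [AddCommGroup K] [Module R K] [Module.Finite R K] :
    ExtVanishesOnPowers J T K i := by
  induction i generalizing K with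
  | zero => exact extVanishesOnPowers_zero hT K
  | succ i ih =>
    intro ξ
    obtain ⟨n, p, hp⟩ := Module.Finite.exists_fin' R K
    obtain ⟨N, hN⟩ := (ih (LinearMap.ker p)).exists_forall_comp_eq_zero hp ξ
    obtain ⟨k, hk⟩ := Ideal.exists_pow_inf_eq_pow_smul J (LinearMap.ker p)
    have map_pow_smul : Submodule.map p (J ^ (N + k) • ⊤) = J ^ (N + k) • ⊤ := by
      rw [Submodule.map_smul'', Submodule.map_top, LinearMap.range_eq_top.2 hp]
    let p' : ↥(J ^ (N + k) • (⊤ : Submodule R (Fin n → R))) →ₗ[R]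
        ↥(J ^ (N + k) • (⊤ : Submodule R K)) :=
      p.restrict fun x hx => map_pow_smul ▸ Submodule.mem_map_of_mem hx
    refine ⟨N + k, hN _ _ p' (Submodule.subtype _) (Submodule.subtype _) ?_ rfl ?_⟩
    · rintro ⟨y, hy⟩
      rw [← map_pow_smul] at hy
      obtain ⟨x, hx, rfl⟩ := hy
      exact ⟨⟨x, hx⟩, rfl⟩
    · -- Artin–Rees turns membership in `J ^ (N + k)` into membership in `J ^ N • ker p`.
      intro z hz
      have : z.1 ∈ J ^ (N + k) • ⊤ ⊓ LinearMap.ker p := ⟨z.2, congrArg Subtype.val hz⟩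
      rw [hk _ (by omega), Nat.add_sub_cancel] at this
      exact Submodule.smul_mono le_rfl inf_le_right this

theorem lcLength_succ_eq_zero_of_pow_smul_top_eq_bot [IsNoetherianRing R] {c : ℕ}
    (hT : J ^ c • (⊤ : Submodule R T) = ⊥) (i : ℕ) : lcLength J (i + 1) T = 0 := by
  refine Module.length_eq_zero_iff.2 (subsingleton_of_forall_eq 0 fun z => ?_)
  obtain ⟨n, ξ, rfl⟩ := Module.DirectLimit.exists_of z
  obtain ⟨N, hN⟩ := (extVanishesOnPowers hT i _).exists_forall_comp_eq_zero
    (Submodule.mkQ_surjective (J ^ n)) ξ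
  rw [← Module.DirectLimit.of_f (hij := Nat.le_add_left n N), extTransition_apply, quotPowMap,
    hN R _ (J ^ (N + n)).mkQ LinearMap.id _ (Submodule.mkQ_surjective _) rfl, map_zero]
  intro z hz
  rw [Submodule.ker_mkQ] at hz ⊢
  rwa [pow_add] at hz

end

section

variable (J : Ideal R)

/-- The map `Hⁱ_J(X) → Hʲ_J(Y)` given by the Yoneda product with a class in `Extᵏ(X, Y)`. -/
def limExtPostcomp {X Y : ModuleCat.{u} R} {k : ℕ} (κ : Abelian.Ext.{u} X Y k) {i j : ℕ}
    (h : i + k = j) : LimExt J i X →ₗ[R] LimExt J j Y :=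
  Module.DirectLimit.map (fun n => (Abelian.Ext.bilinearCompOfLinear R
    (ModuleCat.of R (R ⧸ J ^ n)) X Y i k j h).flip κ) <| by
      intro a b hab
      ext ξ
      exact Abelian.Ext.comp_assoc _ _ _ (zero_add i) h (by omega)

theorem limExtPostcomp_limExtOf {X Y : ModuleCat.{u} R} {k : ℕ} (κ : Abelian.Ext.{u} X Y k)
    {i j : ℕ} (h : i + k = j) (n : ℕ) (ξ : Abelian.Ext.{u} (ModuleCat.of R (R ⧸ J ^ n)) X i) :
    limExtPostcomp J κ h (limExtOf J i X n ξ) = limExtOf J j Y n (ξ.comp κ h) := by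
  rw [limExtPostcomp, limExtOf, Module.DirectLimit.map_apply_of]
  rfl

theorem ker_limExtPostcomp_extClass_le {S : ShortComplex (ModuleCat.{u} R)} (hS : S.ShortExact)
    (i : ℕ) :
    LinearMap.ker (limExtPostcomp J hS.extClass (rfl : i + 1 = i + 1)) ≤
      LinearMap.range (limExtPostcomp J (Abelian.Ext.mk₀ S.g) (add_zero i)) := by
  intro z hz
  obtain ⟨n, ξ, rfl⟩ := Module.DirectLimit.exists_of z
  replace hz : limExtOf J (i + 1) S.X₁ n (ξ.comp hS.extClass rfl) = 0 :=
    (limExtPostcomp_limExtOf J hS.extClass rfl n ξ).symm.trans hz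
  obtain ⟨b, hb, h0⟩ := Module.DirectLimit.of.zero_exact hz
  rw [extTransition_apply, ← Abelian.Ext.comp_assoc _ _ _ (zero_add i) rfl (by omega)] at h0
  obtain ⟨η, hη⟩ := Abelian.Ext.covariant_sequence_exact₃ _ hS _ rfl h0
  refine ⟨limExtOf J i _ b η, (limExtPostcomp_limExtOf J _ (add_zero i) b η).trans ?_⟩
  rw [hη, ← extTransition_apply, limExtOf, Module.DirectLimit.of_f]

theorem length_le_length_add_length_of_ker_le_range {A B C : Type*} [AddCommGroup A] [Module R A]
    [AddCommGroup B] [Module R B] [AddCommGroup C] [Module R C] (f : A →ₗ[R] B) (g : B →ₗ[R] C)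
    (h : LinearMap.ker g ≤ LinearMap.range f) :
    Module.length R B ≤ Module.length R A + Module.length R C := by
  rw [Module.length_eq_add_of_exact (LinearMap.ker g).subtype g.rangeRestrict
    Subtype.val_injective g.surjective_rangeRestrict (by
      rw [LinearMap.exact_iff, LinearMap.ker_rangeRestrict, Submodule.range_subtype])]
  gcongr
  · exact (Module.length_le_of_injective _ (Submodule.inclusion_injective h)).trans
      (Module.length_le_of_surjective f.rangeRestrict f.surjective_rangeRestrict)
  · exact Module.length_le_of_injective (LinearMap.range g).subtype Subtype.val_injective

theorem lcLength_le_add_of_exact {A B C : Type u} [AddCommGroup A] [Module R A] [AddCommGroup B]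
    [Module R B] [AddCommGroup C] [Module R C] {f : A →ₗ[R] B} {g : B →ₗ[R] C} (hf : Injective f)
    (hfg : Exact f g) (hg : Surjective g) (i : ℕ) :
    lcLength J i C ≤ lcLength J i B + lcLength J (i + 1) A :=
  have hS := ModuleCat.shortComplex_shortExact
    (ModuleCat.shortComplexOfCompEqZero f g hfg.linearMap_comp_eq_zero) hfg hf hg
  length_le_length_add_length_of_ker_le_range _ _ (ker_limExtPostcomp_extClass_le J hS i)

end

end Torsion

/-! ### Zeroth local cohomology and depth -/

section ZerothCohomology

variable {R : Type u} [CommRing R]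

section

variable (J : Ideal R) (M : Type u) [AddCommGroup M] [Module R M]

/-- Evaluation of an element of `Ext⁰(R / J ^ n, M) = Hom(R / J ^ n, M)` at `1`. -/
def extEvalOne (n : ℕ) :
    Abelian.Ext.{u} (ModuleCat.of R (R ⧸ J ^ n)) (ModuleCat.of R M) 0 →ₗ[R] M :=
  (LinearMap.applyₗ (Submodule.Quotient.mk 1) : ((R ⧸ J ^ n) →ₗ[R] M) →ₗ[R] M) ∘ₗ
    (Abelian.Ext.linearEquiv₀.trans (ModuleCat.homLinearEquiv (S := R))).toLinearMap

theorem extEvalOne_mk₀ {n : ℕ} (f : ModuleCat.of R (R ⧸ J ^ n) ⟶ ModuleCat.of R M) :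
    extEvalOne J M n (Abelian.Ext.mk₀ f) = f.hom (Submodule.Quotient.mk (p := J ^ n) 1) := by
  have : Abelian.Ext.linearEquiv₀ (R := R) (Abelian.Ext.mk₀ f) = f :=
    (Abelian.Ext.linearEquiv₀ (R := R)).symm.injective (by rw [LinearEquiv.symm_apply_apply]; rfl)
  exact congrArg (fun g => g.hom (Submodule.Quotient.mk (p := J ^ n) 1)) this

/-- Evaluation at `1` on `H⁰_J(M)`. -/
def limExtEvalOne : LimExt J 0 (ModuleCat.of R M) →ₗ[R] M :=
  Module.DirectLimit.lift _ _ _ _ (extEvalOne J M) <| by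
    intro a b h ξ
    rw [extTransition_apply, ← Abelian.Ext.mk₀_homEquiv₀_apply ξ, Abelian.Ext.mk₀_comp_mk₀,
      extEvalOne_mk₀, extEvalOne_mk₀]
    rfl

theorem iSup_torsionBySet_pow_le_range_limExtEvalOne :
    ⨆ n : ℕ, Submodule.torsionBySet R M ((J ^ n : Ideal R) : Set R) ≤
      LinearMap.range (limExtEvalOne J M) := by
  refine iSup_le fun n x hx => ?_
  rw [Submodule.mem_torsionBySet_iff] at hx
  let f : (R ⧸ J ^ n) →ₗ[R] M :=
    (J ^ n).liftQ (LinearMap.toSpanSingleton R M x) fun r hr => hx ⟨r, hr⟩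
  refine ⟨limExtOf J 0 _ n (Abelian.Ext.mk₀ (ModuleCat.ofHom f)), ?_⟩
  rw [limExtEvalOne, limExtOf, Module.DirectLimit.lift_of, extEvalOne_mk₀]
  exact one_smul R x

theorem length_H0_le [IsLocalRing R] :
    Module.length R (H0 R M) ≤ lcLength (maximalIdeal R) 0 M :=
  (Module.length_le_of_injective _ (Submodule.inclusion_injective
    (iSup_torsionBySet_pow_le_range_limExtEvalOne (maximalIdeal R) M))).trans
    (Module.length_le_of_surjective _ (LinearMap.surjective_rangeRestrict _))

end

variable [IsLocalRing R] {M : Type u} [AddCommGroup M] [Module R M]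

theorem mem_H0 {x : M} : x ∈ H0 R M ↔ ∃ n : ℕ, ∀ r ∈ maximalIdeal R ^ n, r • x = 0 := by
  rw [H0, Submodule.mem_iSup_of_directed]
  · simp only [Submodule.mem_torsionBySet_iff, Subtype.forall, SetLike.mem_coe]
  · exact directed_of_isDirected_le fun a b hab =>
      Submodule.torsionBySet_le_torsionBySet_of_subset (Ideal.pow_le_pow_right hab)

theorem maximalIdeal_notMem_associatedPrimes_of_socle_eq_zero [IsNoetherianRing R]
    (hM : ∀ z : M, (∀ r ∈ maximalIdeal R, r • z = 0) → z = 0) :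
    maximalIdeal R ∉ associatedPrimes R M := by
  intro hm
  obtain ⟨hprime, z, hz⟩ := isAssociatedPrime_iff.1 hm
  have z_eq_zero : z = 0 := hM z fun r hr => by
    rwa [hz, Submodule.mem_colon_singleton] at hr
  exact hprime.ne_top (by simp [hz, z_eq_zero])

theorem maximalIdeal_notMem_associatedPrimes_of_H0_eq_bot [IsNoetherianRing R]
    (h : H0 R M = ⊥) : maximalIdeal R ∉ associatedPrimes R M :=
  maximalIdeal_notMem_associatedPrimes_of_socle_eq_zero fun z hz =>
    (Submodule.mem_bot R).1 (h ▸ mem_H0.2 ⟨1, by rwa [pow_one]⟩)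

variable [IsNoetherianRing R]

variable (R M) in
theorem exists_pow_smul_H0_eq_zero [Module.Finite R M] :
    ∃ c : ℕ, ∀ r ∈ maximalIdeal R ^ c, ∀ x ∈ H0 R M, r • x = 0 := by
  obtain ⟨s, hs⟩ := (inferInstance : IsNoetherian R M).noetherian (H0 R M)
  have exponent_exists (x) (hx : x ∈ s) : ∃ n : ℕ, ∀ r ∈ maximalIdeal R ^ n, r • x = 0 :=
    mem_H0.1 (hs ▸ Submodule.subset_span hx)
  choose! N hN using exponent_exists
  refine ⟨s.sup N, fun r hr x hx => ?_⟩
  have : H0 R M ≤ LinearMap.ker (LinearMap.lsmul R M r) := by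
    rw [← hs, Submodule.span_le]
    exact fun y hy => hN y hy r (Ideal.pow_le_pow_right (Finset.le_sup hy) hr)
  exact this hx

variable (R M) in
theorem maximalIdeal_notMem_associatedPrimes_quotient_H0 [Module.Finite R M] :
    maximalIdeal R ∉ associatedPrimes R (M ⧸ H0 R M) := by
  obtain ⟨c, hc⟩ := exists_pow_smul_H0_eq_zero R M
  refine maximalIdeal_notMem_associatedPrimes_of_socle_eq_zero fun z hz => ?_
  obtain ⟨x, rfl⟩ := Submodule.Quotient.mk_surjective _ z
  rw [Submodule.Quotient.mk_eq_zero, mem_H0]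
  refine ⟨c + 1, fun r hr => ?_⟩
  rw [pow_succ] at hr
  induction hr using Submodule.mul_induction_on' with
  | mem_mul_mem a ha b hb =>
    rw [mul_smul]
    refine hc a ha _ ?_
    rw [← Submodule.Quotient.mk_eq_zero, Submodule.Quotient.mk_smul, hz b hb]
  | add a _ b _ ha hb => rw [add_smul, ha, hb, add_zero]

theorem lcLength_quotient_H0_le [Module.Finite R M] (i : ℕ) :
    lcLength (maximalIdeal R) i (M ⧸ H0 R M) ≤ lcLength (maximalIdeal R) i M := by
  obtain ⟨c, hc⟩ := exists_pow_smul_H0_eq_zero R M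
  have pow_smul_top : maximalIdeal R ^ c • (⊤ : Submodule R (H0 R M)) = ⊥ := by
    rw [eq_bot_iff, Submodule.smul_le]
    exact fun r hr x _ => Subtype.ext (hc r hr x.1 x.2)
  have := lcLength_le_add_of_exact (maximalIdeal R) (H0 R M).subtype_injective
    (LinearMap.exact_subtype_mkQ _) (Submodule.mkQ_surjective _) i
  rwa [lcLength_succ_eq_zero_of_pow_smul_top_eq_bot pow_smul_top, add_zero] at this

end ZerothCohomology

section Depth

variable {R : Type u} [CommRing R] {M : Type u} [AddCommGroup M] [Module R M]

theorem lcLength_quotSMulTop_le (J : Ideal R) {x : R} (hx : IsSMulRegular M x) (i : ℕ) :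
    lcLength J i (QuotSMulTop x M) ≤ lcLength J i M + lcLength J (i + 1) M :=
  lcLength_le_add_of_exact J (f := LinearMap.lsmul R M x) hx
    (LinearMap.exact_lsmul_mkQ_smul_top M x) (Submodule.mkQ_surjective _) i

theorem lcLength_zero_eq_zero_of_isSMulRegular {J : Ideal R} {y : R} (hy : y ∈ J)
    (hreg : IsSMulRegular M y) : lcLength J 0 M = 0 := by
  refine Module.length_eq_zero_iff.2 (subsingleton_of_forall_eq 0 fun z => ?_)
  obtain ⟨n, ξ, rfl⟩ := Module.DirectLimit.exists_of z
  suffices ξ = 0 by rw [this, map_zero]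
  rw [← Abelian.Ext.mk₀_homEquiv₀_apply ξ, Abelian.Ext.mk₀_eq_zero_iff]
  set f := Abelian.Ext.homEquiv₀ ξ
  ext
  have pow_smul_one : y ^ n • (Submodule.Quotient.mk 1 : R ⧸ J ^ n) = 0 :=
    (Submodule.Quotient.mk_eq_zero (J ^ n)).2 (Ideal.mul_mem_right _ _ (Ideal.pow_mem_pow hy n))
  refine (hreg.pow n).right_eq_zero_of_smul
    ((map_smul f.hom _ (Submodule.Quotient.mk 1)).symm.trans ?_)
  exact (congrArg f.hom pow_smul_one).trans (map_zero f.hom)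

theorem nontrivial_of_one_le_mdepth [IsLocalRing R] (h : 1 ≤ mdepth R M) : Nontrivial M := by
  obtain ⟨_, ⟨rs, -, -, hrs⟩, -⟩ := lt_sSup_iff.1 (Order.one_le_iff_ne_zero.1 h).bot_lt
  exact hrs.nontrivial

variable [IsLocalRing R] [IsNoetherianRing R] [Module.Finite R M]

theorem lcLength_eq_zero_of_isRegular [Nontrivial M] {rs : List R}
    (mem : ∀ r ∈ rs, r ∈ maximalIdeal R) (reg : RingTheory.Sequence.IsRegular M rs) {i : ℕ}
    (hi : i < rs.length) : lcLength (maximalIdeal R) i M = 0 := by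
  refine Module.length_eq_zero_iff.2 (subsingleton_of_forall_eq 0 fun z => ?_)
  obtain ⟨n, ξ, rfl⟩ := Module.DirectLimit.exists_of z
  have smul_top_lt_top : maximalIdeal R • (⊤ : Submodule R M) < ⊤ :=
    (Submodule.top_ne_ideal_smul_of_le_jacobson_annihilator
      (maximalIdeal_le_jacobson _)).symm.lt_top
  have support_subset : Module.support R (R ⧸ maximalIdeal R ^ n) ⊆
      PrimeSpectrum.zeroLocus (maximalIdeal R) := by
    rw [Module.support_eq_zeroLocus, Ideal.annihilator_quotient]
    exact fun p hp => p.2.le_of_pow_le hp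
  have := ModuleCat.subsingleton_ext_of_exists_isRegular (maximalIdeal R)
    (ModuleCat.of R (R ⧸ maximalIdeal R ^ n)) support_subset (ModuleCat.of R M) smul_top_lt_top
    rs mem reg i hi
  rw [Subsingleton.elim ξ 0, map_zero]

theorem exists_mem_maximalIdeal_isSMulRegular (hM : maximalIdeal R ∉ associatedPrimes R M) :
    ∃ y ∈ maximalIdeal R, IsSMulRegular M y := by
  by_contra! not_regular
  have subset_union : (maximalIdeal R : Set R) ⊆ ⋃ p ∈ associatedPrimes R M, p := by
    rw [biUnion_associatedPrimes_eq_compl_regular]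
    exact not_regular
  obtain ⟨p, hp, le_p⟩ := (Ideal.subset_union_prime_finite (associatedPrimes.finite R M)
    (f := id) 0 0 (fun p hp _ _ => hp.isPrime)).1 subset_union
  exact hM (((maximalIdeal.isMaximal R).eq_of_le hp.isPrime.ne_top le_p).symm ▸ hp)

theorem exists_isRegular_of_lcLength_eq_zero [Nontrivial M] {k : ℕ}
    (h : ∀ i < k, lcLength (maximalIdeal R) i M = 0) :
    ∃ rs : List R, rs.length = k ∧ (∀ r ∈ rs, r ∈ maximalIdeal R) ∧
      RingTheory.Sequence.IsRegular M rs := by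
  induction k generalizing M with
  | zero => exact ⟨[], rfl, by simp, RingTheory.Sequence.IsRegular.nil R M⟩
  | succ k ih =>
    have H0_eq_bot : H0 R M = ⊥ := Submodule.subsingleton_iff_eq_bot.1 <|
      Module.length_eq_zero_iff.1 <| le_bot_iff.1 <| (length_H0_le M).trans_eq (h 0 k.succ_pos)
    obtain ⟨y, hy, hreg⟩ := exists_mem_maximalIdeal_isSMulRegular
      (maximalIdeal_notMem_associatedPrimes_of_H0_eq_bot H0_eq_bot)
    have := nontrivial_quotSMulTop_of_mem_maximalIdeal M hy
    have lcLength_quot (i) (hi : i < k) : lcLength (maximalIdeal R) i (QuotSMulTop y M) = 0 := by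
      have := lcLength_quotSMulTop_le (maximalIdeal R) hreg i
      rwa [h i (by omega), h (i + 1) (by omega), add_zero, nonpos_iff_eq_zero] at this
    obtain ⟨rs, hlength, hmem, hrs⟩ := ih lcLength_quot
    exact ⟨y :: rs, by simp [hlength], by simpa using ⟨hy, hmem⟩, hrs.cons hreg⟩

theorem le_mdepth_iff [Nontrivial M] {k : ℕ} :
    (k : ℕ∞) ≤ mdepth R M ↔ ∀ i < k, lcLength (maximalIdeal R) i M = 0 := by
  constructor
  · intro h i hi
    obtain ⟨_, ⟨rs, rfl, hmem, hrs⟩, hlt⟩ :=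
      lt_sSup_iff.1 (lt_of_lt_of_le (Nat.cast_lt.2 hi) h : (i : ℕ∞) < mdepth R M)
    exact lcLength_eq_zero_of_isRegular hmem hrs (Nat.cast_lt.1 hlt)
  · intro h
    obtain ⟨rs, hlength, hmem, hrs⟩ := exists_isRegular_of_lcLength_eq_zero h
    exact le_sSup ⟨rs, by rw [hlength], hmem, hrs⟩

theorem one_le_mdepth_of_maximalIdeal_notMem_associatedPrimes [Nontrivial M]
    (hM : maximalIdeal R ∉ associatedPrimes R M) : 1 ≤ mdepth R M := by
  obtain ⟨y, hy, hreg⟩ := exists_mem_maximalIdeal_isSMulRegular hM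
  have hy' : ∀ r ∈ [y], r ∈ maximalIdeal R := by simpa using hy
  exact le_sSup ⟨[y], by simp, hy', .of_isWeaklyRegular_of_mem_maximalIdeal M hy'
    (RingTheory.Sequence.isWeaklyRegular_singleton_iff M y |>.2 hreg)⟩

end Depth

/-! ### Schenzel's sums -/

section SchenzelSums

open Finset

/-- Schenzel's sum `∑_{j ≤ k} C(k - 1, j - 1) h_j`. For `h_j` the length of the `j`-th local
cohomology, this is the expected value of `(-1) ^ (d - k) e_{d-k}`. -/
def schenzelSum (k : ℕ) (h : ℕ → ℕ) : ℕ :=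
  ∑ j ∈ range (k + 1), bin k j * h j

theorem schenzelSum_zero (h : ℕ → ℕ) : schenzelSum 0 h = h 0 := by
  simp [schenzelSum, bin]

theorem schenzelSum_succ (k : ℕ) (h : ℕ → ℕ) :
    schenzelSum (k + 1) h = ∑ j ∈ range (k + 1), k.choose j * h (j + 1) := by
  simp [schenzelSum, sum_range_succ', bin]

theorem sum_choose_mul_eq_sum_schenzelSum (d : ℕ) (h : ℕ → ℕ) :
    ∑ i ∈ range d, (d - 1).choose i * h i = ∑ k ∈ range d, schenzelSum k h := by
  induction d with
  | zero => rfl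
  | succ d ih =>
    cases d with
    | zero => simp [schenzelSum_zero]
    | succ d =>
      rw [sum_range_succ (schenzelSum · h), ← ih, schenzelSum_succ]
      exact sum_choose_succ_mul (fun i _ => h i) d

theorem schenzelSum_eq_zero_iff {h : ℕ → ℕ} (h0 : h 0 = 0) (k : ℕ) :
    schenzelSum k h = 0 ↔ ∀ j < k + 1, h j = 0 := by
  cases k with
  | zero => simp [schenzelSum_zero]
  | succ k =>
    have choose_pos (j) (hj : j < k + 1) : k.choose j ≠ 0 :=
      (Nat.choose_pos (Nat.le_of_lt_succ hj)).ne'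
    rw [Nat.forall_lt_succ_left]
    simp +contextual [schenzelSum_succ, h0, choose_pos]

/-- The bounds on the lengths of the local cohomology of `N = (M / H⁰(M)) / x` obtained from
bounds `h` for those of `M`, where `x` is regular on `M / H⁰(M)`. -/
def hyperplaneBound (h : ℕ → ℕ) : ℕ → ℕ
  | 0 => h 1
  | i + 1 => h (i + 1) + h (i + 2)

theorem schenzelSum_hyperplaneBound (k : ℕ) (h : ℕ → ℕ) :
    schenzelSum k (hyperplaneBound h) = schenzelSum (k + 1) h := by
  cases k with
  | zero => simp [schenzelSum_succ, schenzelSum_zero, hyperplaneBound]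
  | succ k =>
    simp only [schenzelSum_succ, hyperplaneBound, mul_add, sum_add_distrib]
    exact (sum_choose_succ_mul (fun i _ => h (i + 1)) k).symm

theorem sum_schenzelSum_succ (d : ℕ) (h : ℕ → ℕ) :
    ∑ k ∈ range (d + 1), schenzelSum k h =
      h 0 + ∑ k ∈ range d, schenzelSum k (hyperplaneBound h) := by
  simp only [sum_range_succ', schenzelSum_zero, schenzelSum_hyperplaneBound, add_comm]

theorem sum_range_multichoose (d n : ℕ) :
    ∑ m ∈ range (n + 1), Nat.multichoose d m = Nat.multichoose (d + 1) n := by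
  induction n with
  | zero => simp
  | succ n ih => rw [sum_range_succ, ih, Nat.multichoose_succ_succ, add_comm]

/-- The Hilbert–Samuel polynomial, evaluated at `n + 1`, of multiplicity `c` and with the lower
coefficients prescribed by Schenzel's formula. -/
def schenzelPoly (d : ℕ) (c : ℤ) (h : ℕ → ℕ) (n : ℕ) : ℤ :=
  c * Nat.multichoose (d + 1) n + ∑ k ∈ range d, (schenzelSum k h : ℤ) * Nat.multichoose (k + 1) n

theorem schenzelPoly_succ (d : ℕ) (c : ℤ) (h : ℕ → ℕ) (n : ℕ) :
    schenzelPoly (d + 1) c h n =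
      h 0 + ∑ m ∈ range (n + 1), schenzelPoly d c (hyperplaneBound h) m := by
  have sum_multichoose (k) : ∑ m ∈ range (n + 1), (Nat.multichoose k m : ℤ) =
      Nat.multichoose (k + 1) n := mod_cast sum_range_multichoose k n
  simp only [schenzelPoly, sum_add_distrib]
  rw [sum_comm, ← mul_sum, sum_multichoose, sum_range_succ']
  simp only [← mul_sum, sum_multichoose, schenzelSum_zero, schenzelSum_hyperplaneBound, zero_add,
    Nat.multichoose_one]
  push_cast
  ring

end SchenzelSums

/-! ### Growth of numerical functions -/

section Growth

open Finset

/-- `L (n + 1)` is at least `c * n ^ d / d !` up to terms of lower order in `n`; powers of `n`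
are expressed through `Nat.multichoose`, as `(d + 1).multichoose n = C(n + d, d)`. -/
def LeadingCoeffGE (d : ℕ) (L : ℕ → ℕ) (c : ℤ) : Prop :=
  ∃ K : ℕ, ∀ n, c * Nat.multichoose (d + 1) n ≤ L (n + 1) + K * Nat.multichoose d n

theorem LeadingCoeffGE.mono {d : ℕ} {L L' : ℕ → ℕ} {c c' : ℤ} (h : LeadingCoeffGE d L c)
    (hL : ∀ n, L n ≤ L' n) (hc : c' ≤ c) : LeadingCoeffGE d L' c' := by
  obtain ⟨K, hK⟩ := h
  refine ⟨K, fun n => ?_⟩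
  calc c' * Nat.multichoose (d + 1) n
      ≤ c * Nat.multichoose (d + 1) n := by gcongr
    _ ≤ L (n + 1) + K * Nat.multichoose d n := hK n
    _ ≤ L' (n + 1) + K * Nat.multichoose d n := by gcongr; exact hL _

theorem one_le_multichoose (d n : ℕ) : 1 ≤ Nat.multichoose (d + 1) n := by
  rw [Nat.multichoose_eq]
  exact Nat.choose_pos (by omega)

theorem sum_range_sub_le (f : ℕ → ℕ) (c n : ℕ) :
    ∑ m ∈ range n, f (m - c) ≤ c * f 0 + ∑ m ∈ range n, f m := by
  induction c generalizing n with
  | zero => simp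
  | succ c ih =>
    cases n with
    | zero => simp
    | succ n =>
      have := ih n
      rw [sum_range_succ', sum_range_succ f]
      simp only [Nat.add_sub_add_right, Nat.zero_sub]
      linarith [Nat.zero_le (f n)]

theorem add_sum_eq_sum_of_add_eq {L L' ε : ℕ → ℕ} (L_zero : L 0 = 0)
    (h : ∀ n, L (n + 1) + ε n = L' (n + 1) + L n) (n : ℕ) :
    L n + ∑ m ∈ range n, ε m = ∑ m ∈ range n, L' (m + 1) := by
  induction n with
  | zero => simpa using L_zero
  | succ n ih =>
    rw [sum_range_succ, sum_range_succ, ← ih]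
    linarith [h n]

theorem LeadingCoeffGE.succ {d : ℕ} {L L' ε : ℕ → ℕ} {c : ℤ} (hL' : LeadingCoeffGE d L' c)
    (L_zero : L 0 = 0) (h : ∀ n, L (n + 1) + ε n = L' (n + 1) + L n) {C c₀ : ℕ}
    (hε : ∀ n, ε n ≤ C * Nat.multichoose d (n - c₀)) : LeadingCoeffGE (d + 1) L c := by
  obtain ⟨K, hK⟩ := hL'
  refine ⟨K + C * (c₀ + 1), fun n => ?_⟩
  have sum_ε_le : ∑ m ∈ range (n + 1), ε m ≤ C * (c₀ + 1) * Nat.multichoose (d + 1) n := calc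
    ∑ m ∈ range (n + 1), ε m ≤ C * ∑ m ∈ range (n + 1), Nat.multichoose d (m - c₀) := by
      rw [mul_sum]; exact sum_le_sum fun m _ => hε m
    _ ≤ C * (c₀ * Nat.multichoose d 0 + Nat.multichoose (d + 1) n) := by
      rw [← sum_range_multichoose]
      exact Nat.mul_le_mul_left C (sum_range_sub_le _ c₀ _)
    _ ≤ C * (c₀ * Nat.multichoose (d + 1) n + Nat.multichoose (d + 1) n) := by
      gcongr; simpa using one_le_multichoose d n
    _ = C * (c₀ + 1) * Nat.multichoose (d + 1) n := by ring
  have telescoped := add_sum_eq_sum_of_add_eq L_zero h (n + 1)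
  calc c * Nat.multichoose (d + 1 + 1) n
      = ∑ m ∈ range (n + 1), c * Nat.multichoose (d + 1) m := by
        rw [← mul_sum, ← sum_range_multichoose (d + 1)]; push_cast; rfl
    _ ≤ ∑ m ∈ range (n + 1), ((L' (m + 1) : ℤ) + K * Nat.multichoose d m) :=
        sum_le_sum fun m _ => hK m
    _ = L (n + 1) + ∑ m ∈ range (n + 1), (ε m : ℤ) + K * Nat.multichoose (d + 1) n := by
        rw [sum_add_distrib, ← mul_sum, ← sum_range_multichoose d]
        exact_mod_cast congrArg (· + _) telescoped.symm
    _ ≤ L (n + 1) + (K + C * (c₀ + 1) : ℕ) * Nat.multichoose (d + 1) n := by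
        push_cast
        linarith [(mod_cast sum_ε_le :
          ∑ m ∈ range (n + 1), (ε m : ℤ) ≤ C * (c₀ + 1) * Nat.multichoose (d + 1) n)]

theorem multichoose_mono_left {k d : ℕ} (h : k ≤ d) (n : ℕ) :
    Nat.multichoose k n ≤ Nat.multichoose d n := by
  rw [Nat.multichoose_eq, Nat.multichoose_eq]
  exact Nat.choose_le_choose _ (by omega)

theorem multichoose_succ_eq_choose (d n : ℕ) : Nat.multichoose (d + 1) n = (n + d).choose d := by
  rw [Nat.multichoose_eq, Nat.choose_symm_of_eq_add (a := n) (b := d)] <;> grind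

theorem multichoose_succ_mul (d n : ℕ) :
    Nat.multichoose (d + 2) n * (d + 1) = (n + d + 1) * Nat.multichoose (d + 1) n := by
  rw [multichoose_succ_eq_choose, multichoose_succ_eq_choose, ← add_assoc,
    ← Nat.add_one_mul_choose_eq]

theorem not_eventually_multichoose_succ_le (d S : ℕ) :
    ¬ ∀ᶠ n in atTop, Nat.multichoose (d + 1) n ≤ S * Nat.multichoose d n := by
  intro h
  obtain ⟨n, hn, n_gt⟩ := (h.and (eventually_gt_atTop (S * d))).exists
  obtain ⟨n, rfl⟩ := Nat.exists_eq_succ_of_ne_zero (Nat.ne_zero_of_lt n_gt)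
  cases d with
  | zero => simp at hn
  | succ d =>
    have : (n + 1 + d + 1) * Nat.multichoose (d + 1) (n + 1) ≤
        (S * (d + 1)) * Nat.multichoose (d + 1) (n + 1) := by
      rw [← multichoose_succ_mul]
      linarith [Nat.mul_le_mul_right (d + 1) hn]
    have := Nat.le_of_mul_le_mul_right this (one_le_multichoose d (n + 1))
    omega

theorem sum_mul_multichoose_le (d : ℕ) (a : ℕ → ℤ) (n : ℕ) :
    ∑ k ∈ range d, a k * Nat.multichoose (k + 1) n ≤
      (∑ k ∈ range d, (a k).natAbs : ℕ) * Nat.multichoose d n := by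
  push_cast
  rw [sum_mul]
  refine sum_le_sum fun k hk => ?_
  gcongr
  · exact le_abs_self _
  · exact multichoose_mono_left (mem_range.1 hk) n

theorem not_leadingCoeffGE_of_eventually_eq {d : ℕ} {L : ℕ → ℕ} {a : ℕ → ℤ}
    (h : ∀ᶠ n in atTop,
      (L (n + 1) : ℤ) = ∑ k ∈ range (d + 1), a k * Nat.multichoose (k + 1) n) :
    ¬ LeadingCoeffGE d L (a d + 1) := by
  rintro ⟨K, hK⟩
  refine not_eventually_multichoose_succ_le d (∑ k ∈ range d, (a k).natAbs + K) ?_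
  filter_upwards [h] with n hn
  have := hK n
  rw [hn, sum_range_succ] at this
  rw [← Nat.cast_le (α := ℤ), Nat.cast_mul, Nat.cast_add]
  linarith [sum_mul_multichoose_le d a n]

theorem eq_zero_of_eventually_sum_mul_multichoose_eq_zero {d : ℕ} {a : ℕ → ℤ}
    (h : ∀ᶠ n in atTop, ∑ k ∈ range d, a k * (Nat.multichoose (k + 1) n : ℤ) = 0) :
    ∀ k < d, a k = 0 := by
  induction d generalizing a with
  | zero => simp
  | succ d ih =>
    have difference : ∀ᶠ n in atTop,
        ∑ k ∈ range d, a (k + 1) * (Nat.multichoose (k + 1) n : ℤ) = 0 := by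
      obtain ⟨N, hN⟩ := eventually_atTop.1 h
      filter_upwards [eventually_ge_atTop (N + 1)] with n hn
      obtain ⟨n, rfl⟩ := Nat.exists_eq_add_of_lt hn
      have h₁ := hN (N + n) (by omega)
      have h₂ := hN (N + n + 1) (by omega)
      simp only [Nat.multichoose_succ_succ, Nat.cast_add, mul_add, sum_add_distrib, h₁,
        add_zero] at h₂
      simpa [sum_range_succ'] using h₂
    have succ_eq_zero := ih difference
    have zero_eq_zero : a 0 = 0 := by
      obtain ⟨n, hn⟩ := h.exists
      rwa [sum_range_succ', sum_eq_zero fun k hk => by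
        rw [succ_eq_zero k (mem_range.1 hk), zero_mul], zero_add, Nat.multichoose_one,
        Nat.cast_one, mul_one] at hn
    exact Nat.forall_lt_succ_left.2 ⟨zero_eq_zero, succ_eq_zero⟩

theorem hsPoly_succ (d : ℕ) (e : ℕ → ℤ) (n : ℕ) :
    hsPoly d e (n + 1) =
      ∑ k ∈ range (d + 1), (-1) ^ (d - k) * e (d - k) * Nat.multichoose (k + 1) n := by
  rw [hsPoly, ← sum_range_reflect]
  refine sum_congr rfl fun k hk => ?_
  have := mem_range.1 hk
  rw [multichoose_succ_eq_choose]
  congr 3 <;> grind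

end Growth

/-! ### Avoiding primes on a coset -/

section CosetAvoidance

variable {R : Type u} [CommRing R] {S : Set (Ideal R)} {a : R} {B : Ideal R}

theorem exists_mem_forall_notMem (hS : S.Finite) (prime : ∀ p ∈ S, p.IsPrime)
    (hB : ∀ p ∈ S, ¬ B ≤ p) : ∃ c ∈ B, ∀ p ∈ S, c ∉ p := by
  by_contra! covered
  have subset_union : (B : Set R) ⊆ ⋃ p ∈ S, p := fun c hc => by simpa using covered c hc
  obtain ⟨p, hp, le_p⟩ := (Ideal.subset_union_prime_finite hS (f := id) 0 0
    (fun p hp _ _ => prime p hp)).1 subset_union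
  exact hB p hp le_p

theorem exists_mem_forall_add_notMem_of_isAntichain (hS : S.Finite) (prime : ∀ p ∈ S, p.IsPrime)
    (antichain : IsAntichain (· ≤ ·) S) (hB : ∀ p ∈ S, a ∈ p → ¬ B ≤ p) :
    ∃ c ∈ B, ∀ p ∈ S, a + c ∉ p := by
  set U := (hS.subset (Set.sep_subset S (a ∉ ·))).toFinset with hU
  -- `c` has to lie in the primes not containing `a` and outside those containing `a`.
  have not_le (p) (hp : p ∈ {p ∈ S | a ∈ p}) : ¬ B ⊓ U.inf id ≤ p := by
    intro le_p
    have := prime p hp.1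
    rcases this.inf_le.1 le_p with B_le | inf_le
    · exact hB p hp.1 hp.2 B_le
    · obtain ⟨q, hq, q_le⟩ := this.inf_le'.1 inf_le
      rw [hU, Set.Finite.mem_toFinset] at hq
      exact hq.2 (antichain.eq hq.1 hp.1 q_le ▸ hp.2)
  obtain ⟨c, ⟨hcB, hcU⟩, hc⟩ := exists_mem_forall_notMem (hS.subset (Set.sep_subset S (a ∈ ·)))
    (fun p hp => prime p hp.1) not_le
  refine ⟨c, hcB, fun p hp add_mem => ?_⟩
  by_cases hap : a ∈ p
  · exact hc p ⟨hp, hap⟩ ((Ideal.add_mem_iff_right p hap).1 add_mem)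
  · have hpU : p ∈ U := by simpa [hU] using ⟨hp, hap⟩
    have hcp : c ∈ p := (Finset.inf_le hpU : U.inf id ≤ p) hcU
    exact hap ((Ideal.add_mem_iff_left p hcp).1 add_mem)

theorem exists_mem_forall_add_notMem (hS : S.Finite) (prime : ∀ p ∈ S, p.IsPrime)
    (hB : ∀ p ∈ S, a ∈ p → ¬ B ≤ p) : ∃ c ∈ B, ∀ p ∈ S, a + c ∉ p := by
  have maximal_subset : {p | Maximal (· ∈ S) p} ⊆ S := fun p hp => hp.1
  obtain ⟨c, hcB, hc⟩ := exists_mem_forall_add_notMem_of_isAntichain (hS.subset maximal_subset)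
    (fun p hp => prime p hp.1) (setOfPred_maximal_antichain (· ∈ S)) (fun p hp => hB p hp.1)
  refine ⟨c, hcB, fun p hp add_mem => ?_⟩
  obtain ⟨q, p_le, hq⟩ := hS.exists_le_maximal hp
  exact hc q hq (p_le add_mem)

end CosetAvoidance

/-! ### Relatively regular sequences -/

section RelativelyRegular

open scoped Pointwise

variable {R : Type u} [CommRing R] {M M' : Type u} [AddCommGroup M] [Module R M]
  [AddCommGroup M'] [Module R M']

/-- The sequence `a₁, …, aᵣ` is regular on `W` relative to `V`: each `aᵢ` is injective on `W`
modulo `V + (a₁, …, aᵢ₋₁) M`. For `W = I M` with `I = (a₁, …, aᵣ)` and `V = 0` this is the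
part of the `d`-sequence property of a standard system of parameters that determines the
Hilbert function. -/
def IsRelRegular (W : Submodule R M) : List R → Submodule R M → Prop
  | [], _ => True
  | a :: as, V => (∀ z ∈ W, a • z ∈ V → z ∈ V) ∧ IsRelRegular W as (V ⊔ a • ⊤)

theorem map_smul_top (π : M →ₗ[R] M') (hπ : Surjective π) (I : Ideal R) :
    (I • (⊤ : Submodule R M)).map π = I • (⊤ : Submodule R M') := by
  rw [Submodule.map_smul'', Submodule.map_top, LinearMap.range_eq_top.2 hπ]

theorem map_pointwise_smul_top (π : M →ₗ[R] M') (hπ : Surjective π) (a : R) :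
    (a • (⊤ : Submodule R M)).map π = a • (⊤ : Submodule R M') := by
  simpa only [Submodule.ideal_span_singleton_smul] using map_smul_top π hπ (Ideal.span {a})

theorem IsRelRegular.of_map {π : M →ₗ[R] M'} (hπ : Surjective π) {W : Submodule R M}
    {as : List R} (has : ∀ a ∈ as, a • ⊤ ≤ W) {V : Submodule R M} (hV : V ≤ W)
    (hker : LinearMap.ker π ⊓ W ≤ V) (h : IsRelRegular (W.map π) as (V.map π)) :
    IsRelRegular W as V := by
  induction as generalizing V with
  | nil => trivial
  | cons a as ih =>
    obtain ⟨injective_mod, rest⟩ := h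
    rw [List.forall_mem_cons] at has
    refine ⟨fun z hz haz => ?_, ih has.2 (sup_le hV has.1) (hker.trans le_sup_left) ?_⟩
    · obtain ⟨v, hv, hvz⟩ := injective_mod (π z) (Submodule.mem_map_of_mem hz)
        (map_smul π a z ▸ Submodule.mem_map_of_mem haz)
      have sub_mem : z - v ∈ V :=
        hker ⟨LinearMap.sub_mem_ker_iff.2 hvz.symm, W.sub_mem hz (hV hv)⟩
      simpa using V.add_mem sub_mem hv
    · rwa [Submodule.map_sup, map_pointwise_smul_top π hπ]

theorem smul_top_inf_pow_smul_top_le {I A : Ideal R} {as : List R} (hI : I = A ⊔ Ideal.ofList as)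
    (h : IsRelRegular (I • (⊤ : Submodule R M)) as (A • ⊤)) (n : ℕ) :
    A • (⊤ : Submodule R M) ⊓ I ^ (n + 1) • ⊤ ≤ A • I ^ n • ⊤ := by
  induction as generalizing A n with
  | nil =>
    obtain rfl : I = A := by simpa using hI
    rw [pow_succ', mul_smul]
    exact inf_le_right
  | cons a as ih =>
    rw [Ideal.ofList_cons, ← sup_assoc] at hI
    have haI : a ∈ I :=
      hI ▸ Ideal.mem_sup_left (Ideal.mem_sup_right (Ideal.mem_span_singleton_self a))
    obtain ⟨injective_mod, rest⟩ := h
    rw [← Submodule.ideal_span_singleton_smul, ← Submodule.sup_smul] at rest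
    induction n with
    | zero => simp
    | succ n ihn =>
      rintro y ⟨hyA, hyI⟩
      have hy := ih hI rest (n + 1) ⟨Submodule.smul_mono_left le_sup_left hyA, hyI⟩
      rw [Submodule.sup_smul, Submodule.ideal_span_singleton_smul] at hy
      obtain ⟨u, hu, _, ⟨z, hz, rfl⟩, rfl⟩ := Submodule.mem_sup.1 hy
      have haz : a • z ∈ A • (⊤ : Submodule R M) :=
        (Submodule.add_mem_iff_right _ (Submodule.smul_mono le_rfl le_top hu)).1 hyA
      have hzI : z ∈ I • (⊤ : Submodule R M) :=
        Submodule.smul_mono_left (Ideal.pow_le_self n.succ_ne_zero) hz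
      have hzA : z ∈ A • I ^ n • (⊤ : Submodule R M) := ihn ⟨injective_mod z hzI haz, hz⟩
      refine Submodule.add_mem _ hu ?_
      rw [pow_succ', mul_smul, smul_comm]
      exact Submodule.smul_mem_smul haI hzA

end RelativelyRegular

/-! ### Hilbert functions -/

section Length

variable {R : Type u} [CommRing R] {M N : Type u} [AddCommGroup M] [Module R M]
  [AddCommGroup N] [Module R N]

theorem length_eq_length_ker_add_length_range (f : M →ₗ[R] N) :
    Module.length R M = Module.length R (LinearMap.ker f) + Module.length R (LinearMap.range f) :=
  Module.length_eq_add_of_exact (LinearMap.ker f).subtype f.rangeRestrict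
    (LinearMap.ker f).subtype_injective f.surjective_rangeRestrict
    (f.ker_rangeRestrict ▸ LinearMap.exact_subtype_ker_map f.rangeRestrict)

theorem length_eq_length_add_length_quotient (W : Submodule R M) :
    Module.length R M = Module.length R W + Module.length R (M ⧸ W) :=
  Module.length_eq_add_of_exact W.subtype W.mkQ W.subtype_injective W.mkQ_surjective
    (LinearMap.exact_subtype_mkQ W)

theorem length_mono {V W : Submodule R M} (h : V ≤ W) : Module.length R V ≤ Module.length R W :=
  Module.length_le_of_injective (Submodule.inclusion h) (Submodule.inclusion_injective h)

theorem length_map_mkQ_add_length_inf (W V : Submodule R M) :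
    Module.length R (W.map V.mkQ) + Module.length R (W ⊓ V : Submodule R M) =
      Module.length R W := by
  have ker_eq : LinearMap.ker (V.mkQ.domRestrict W) = V.comap W.subtype := by
    rw [LinearMap.domRestrict, LinearMap.ker_comp, V.ker_mkQ]
  rw [length_eq_length_ker_add_length_range (V.mkQ.domRestrict W), add_comm,
    LinearMap.range_domRestrict, ker_eq, ← Submodule.map_comap_subtype,
    (W.equivSubtypeMap (V.comap W.subtype)).length_eq]

theorem length_quotient_smul_top (W : Submodule R M) (J : Ideal R) :
    Module.length R (M ⧸ J • (⊤ : Submodule R M)) =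
      Module.length R (W.map (J • (⊤ : Submodule R M)).mkQ) +
        Module.length R ((M ⧸ W) ⧸ J • (⊤ : Submodule R (M ⧸ W))) := by
  rw [length_eq_length_add_length_quotient (W.map (J • (⊤ : Submodule R M)).mkQ),
    (Submodule.quotientQuotientEquivQuotientSup (J • ⊤) W).length_eq, sup_comm,
    ← (Submodule.quotientQuotientEquivQuotientSup W (J • ⊤)).length_eq,
    map_smul_top W.mkQ W.mkQ_surjective]

theorem length_map_mkQ_span_smul_top_le {ι : Type} [Finite ι] (a : ι → R) (W V : Submodule R M)
    (h : ∀ i, ∀ w ∈ W, a i • w ∈ V) :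
    Module.length R ((Ideal.span (Set.range a) • (⊤ : Submodule R M)).map V.mkQ) ≤
      ENat.card ι * Module.length R (M ⧸ W) := by
  classical
  have := Fintype.ofFinite ι
  let f : (ι → M ⧸ W) →ₗ[R] M ⧸ V :=
    LinearMap.lsum R _ R fun i => W.mapQ V (LinearMap.lsmul R M (a i)) (h i)
  have le_range : (Ideal.span (Set.range a) • (⊤ : Submodule R M)).map V.mkQ ≤
      LinearMap.range f := by
    rw [Submodule.map_le_iff_le_comap, Submodule.span_smul_eq, Submodule.set_smul_le_iff]
    rintro _ m ⟨i, rfl⟩ _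
    exact ⟨Pi.single i (W.mkQ m), LinearMap.lsum_piSingle _ _ _ _ _ _⟩
  calc Module.length R ((Ideal.span (Set.range a) • (⊤ : Submodule R M)).map V.mkQ)
      ≤ Module.length R (LinearMap.range f) := length_mono le_range
    _ ≤ Module.length R (ι → M ⧸ W) :=
        Module.length_le_of_surjective f.rangeRestrict f.surjective_rangeRestrict
    _ = ENat.card ι * Module.length R (M ⧸ W) := Module.length_pi

theorem span_range_pow_eq_span_range_sym {d : ℕ} (b : Fin d → R) (r : ℕ) :
    Ideal.span (Set.range b) ^ r =
      Ideal.span (Set.range fun s : Sym (Fin d) r => ((s : Multiset (Fin d)).map b).prod) := by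
  rw [Ideal.span, Submodule.span_pow]
  congr 1
  ext y
  rw [Set.mem_pow]
  constructor
  · rintro ⟨f, rfl⟩
    choose g hg using fun i => (f i).2
    exact ⟨⟨List.ofFn g, by simp⟩, by simp [List.map_ofFn, Function.comp_def, hg]⟩
  · rintro ⟨⟨⟨l⟩, hl⟩, rfl⟩
    obtain rfl : l.length = r := hl
    exact ⟨fun i => ⟨b (l.get i), Set.mem_range_self _⟩, by simp⟩

theorem length_map_mkQ_span_pow_smul_top_le {d : ℕ} (b : Fin d → R) (r : ℕ) (W V : Submodule R M)
    (h : Ideal.span (Set.range b) ^ r • W ≤ V) :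
    Module.length R ((Ideal.span (Set.range b) ^ r • (⊤ : Submodule R M)).map V.mkQ) ≤
      Nat.multichoose d r * Module.length R (M ⧸ W) := by
  rw [span_range_pow_eq_span_range_sym] at h ⊢
  refine (length_map_mkQ_span_smul_top_le _ W V fun s w hw =>
    h (Submodule.smul_mem_smul (Ideal.subset_span (Set.mem_range_self s)) hw)).trans_eq ?_
  rw [ENat.card_eq_coe_fintype_card, Sym.card_sym_eq_multichoose, Fintype.card_fin]

end Length

section HilbertFunction

variable {R : Type u} [CommRing R] {I : Ideal R} {M : Type u} [AddCommGroup M] [Module R M]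

variable (I M) in
/-- The Hilbert–Samuel function `n ↦ λ(M / Iⁿ M)`, with the junk value `0` where the length is
infinite. -/
def hilbFn (n : ℕ) : ℕ :=
  (Module.length R (M ⧸ I ^ n • (⊤ : Submodule R M))).toNat

theorem hilbFn_zero : hilbFn I M 0 = 0 := by
  simp [hilbFn]

theorem pow_smul_top_congr {J : Ideal R} (h : I • (⊤ : Submodule R M) = J • ⊤) (n : ℕ) :
    I ^ n • (⊤ : Submodule R M) = J ^ n • ⊤ := by
  induction n with
  | zero => simp only [pow_zero]
  | succ n ih => rw [pow_succ', pow_succ, mul_smul, mul_smul, ih, smul_comm, h]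

theorem hilbFn_congr {J : Ideal R} (h : I • (⊤ : Submodule R M) = J • ⊤) :
    hilbFn I M = hilbFn J M :=
  funext fun n => by rw [hilbFn, hilbFn, pow_smul_top_congr h]

theorem length_quotient_smul_top_ne_top {M' : Type u} [AddCommGroup M'] [Module R M']
    {π : M →ₗ[R] M'} (hπ : Surjective π)
    (h : Module.length R (M ⧸ I • (⊤ : Submodule R M)) ≠ ⊤) :
    Module.length R (M' ⧸ I • (⊤ : Submodule R M')) ≠ ⊤ := by
  have le_comap : I • (⊤ : Submodule R M) ≤ (I • (⊤ : Submodule R M')).comap π := by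
    rw [← Submodule.map_le_iff_le_comap, map_smul_top π hπ]
  refine ne_top_of_le_ne_top h
    (Module.length_le_of_surjective (Submodule.mapQ _ _ π le_comap) ?_)
  rw [← LinearMap.range_eq_top, Submodule.range_mapQ, LinearMap.range_eq_top.2 hπ,
    Submodule.map_top, Submodule.range_mkQ]

theorem length_quotient_pow_smul_top_ne_top [IsNoetherianRing R]
    (h : Module.length R (M ⧸ I • (⊤ : Submodule R M)) ≠ ⊤) (n : ℕ) :
    Module.length R (M ⧸ I ^ n • (⊤ : Submodule R M)) ≠ ⊤ := by
  induction n with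
  | zero => simp
  | succ n ih =>
    obtain ⟨k, a, ha⟩ :=
      Submodule.fg_iff_exists_fin_generating_family.1 (IsNoetherian.noetherian (I ^ n))
    have length_le := length_map_mkQ_span_smul_top_le a (I • (⊤ : Submodule R M))
      (I ^ (n + 1) • ⊤) fun i w hw => by
        rw [pow_succ, mul_smul]
        exact Submodule.smul_mem_smul (ha ▸ Submodule.subset_span (Set.mem_range_self i)) hw
    rw [Ideal.span, ha] at length_le
    rw [length_eq_length_add_length_quotient
        ((I ^ n • (⊤ : Submodule R M)).map (I ^ (n + 1) • (⊤ : Submodule R M)).mkQ),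
      (Submodule.quotientQuotientEquivQuotient _ _
        (Submodule.smul_mono_left (Ideal.pow_le_pow_right n.le_succ))).length_eq]
    have card_ne_top : ENat.card (Fin k) ≠ ⊤ := by simp
    exact WithTop.add_ne_top.2
      ⟨ne_top_of_le_ne_top (WithTop.mul_ne_top card_ne_top h) length_le, ih⟩

theorem coe_hilbFn [IsNoetherianRing R]
    (h : Module.length R (M ⧸ I • (⊤ : Submodule R M)) ≠ ⊤) (n : ℕ) :
    (hilbFn I M n : ℕ∞) = Module.length R (M ⧸ I ^ n • (⊤ : Submodule R M)) :=
  ENat.natCast_toNat (length_quotient_pow_smul_top_ne_top h n)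

end HilbertFunction

section MulQuotient

open scoped Pointwise

variable {R : Type u} [CommRing R] {I : Ideal R} {x : R} {M : Type u} [AddCommGroup M] [Module R M]

variable (M) in
/-- Multiplication by `x ∈ I` as a map `M / Iⁿ M → M / Iⁿ⁺¹ M`. -/
def mulQuot (hx : x ∈ I) (n : ℕ) :
    (M ⧸ I ^ n • (⊤ : Submodule R M)) →ₗ[R] M ⧸ I ^ (n + 1) • (⊤ : Submodule R M) :=
  Submodule.mapQ _ _ (LinearMap.lsmul R M x) fun z hz => by
    rw [Submodule.mem_comap, pow_succ', mul_smul]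
    exact Submodule.smul_mem_smul hx hz

theorem mk_mem_ker_mulQuot_iff (hx : x ∈ I) (n : ℕ) (z : M) :
    Submodule.Quotient.mk z ∈ LinearMap.ker (mulQuot M hx n) ↔
      x • z ∈ I ^ (n + 1) • (⊤ : Submodule R M) :=
  Submodule.Quotient.mk_eq_zero _

theorem range_mulQuot (hx : x ∈ I) (n : ℕ) :
    LinearMap.range (mulQuot M hx n) =
      (x • (⊤ : Submodule R M)).map (I ^ (n + 1) • (⊤ : Submodule R M)).mkQ := by
  rw [mulQuot, Submodule.range_mapQ, LinearMap.range_eq_map]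
  rfl

variable (M) in
/-- The length of the kernel of multiplication by `x` from `M / Iⁿ M` to `M / Iⁿ⁺¹ M`, that is,
of `(Iⁿ⁺¹ M : x) / Iⁿ M`: the defect in the Hilbert functions of `M` and `M / x M`. -/
def hilbDefect (hx : x ∈ I) (n : ℕ) : ℕ :=
  (Module.length R (LinearMap.ker (mulQuot M hx n))).toNat

theorem hilbDefect_eq_zero (hx : x ∈ I) (n : ℕ)
    (h : ∀ z : M, x • z ∈ I ^ (n + 1) • (⊤ : Submodule R M) → z ∈ I ^ n • (⊤ : Submodule R M)) :
    hilbDefect M hx n = 0 := by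
  have ker_eq_bot : LinearMap.ker (mulQuot M hx n) = ⊥ := by
    rw [Submodule.eq_bot_iff]
    rintro ⟨z⟩ hz
    exact (Submodule.Quotient.mk_eq_zero _).2 (h z ((mk_mem_ker_mulQuot_iff hx n z).1 hz))
  rw [hilbDefect, ker_eq_bot, Module.length_bot, ENat.toNat_zero]

variable [IsNoetherianRing R]

theorem coe_hilbDefect (hx : x ∈ I) (h : Module.length R (M ⧸ I • (⊤ : Submodule R M)) ≠ ⊤)
    (n : ℕ) : (hilbDefect M hx n : ℕ∞) = Module.length R (LinearMap.ker (mulQuot M hx n)) :=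
  ENat.natCast_toNat <| ne_top_of_le_ne_top (length_quotient_pow_smul_top_ne_top h n)
    (Module.length_le_of_injective _ (LinearMap.ker (mulQuot M hx n)).subtype_injective)

theorem hilbFn_succ_add_hilbDefect (hx : x ∈ I)
    (h : Module.length R (M ⧸ I • (⊤ : Submodule R M)) ≠ ⊤) (n : ℕ) :
    hilbFn I M (n + 1) + hilbDefect M hx n = hilbFn I (QuotSMulTop x M) (n + 1) + hilbFn I M n := by
  have h' := length_quotient_smul_top_ne_top (Submodule.mkQ_surjective (x • (⊤ : Submodule R M))) h
  have length_quot := length_quotient_smul_top (x • (⊤ : Submodule R M)) (I ^ (n + 1))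
  have length_mulQuot := length_eq_length_ker_add_length_range (mulQuot M hx n)
  rw [← Nat.cast_inj (R := ℕ∞)]
  push_cast
  rw [coe_hilbFn h, coe_hilbFn h', coe_hilbFn h, coe_hilbDefect hx h, length_quot,
    length_mulQuot, range_mulQuot]
  ring

end MulQuotient

section ColonBound

open scoped Pointwise

variable {R : Type u} [CommRing R] {M : Type u} [AddCommGroup M] [Module R M]

theorem sup_pow_succ_le (A B : Ideal R) (k : ℕ) :
    (A ⊔ B) ^ (k + 1) ≤ A * (A ⊔ B) ^ k ⊔ B ^ (k + 1) := by
  induction k with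
  | zero => simp
  | succ k ih =>
    rw [pow_succ' _ (k + 1), Ideal.sup_mul]
    refine sup_le le_sup_left ((Ideal.mul_mono_right ih).trans ?_)
    rw [Ideal.mul_sup, ← pow_succ', mul_left_comm, pow_succ' _ k]
    exact sup_le_sup_right (Ideal.mul_mono_right (Ideal.mul_mono_left le_sup_right)) _

variable [IsNoetherianRing R] [Module.Finite R M] {x : R}

-- The truncated subtraction makes the statement trivial for `n < c`.
theorem exists_forall_mem_sup_of_smul_mem (hx : IsSMulRegular M x) (B : Ideal R) :
    ∃ c, ∀ n, ∀ z : M, x • z ∈ (Ideal.span {x} ⊔ B) ^ (n + 1) • (⊤ : Submodule R M) →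
      z ∈ (Ideal.span {x} ⊔ B) ^ n • (⊤ : Submodule R M) ⊔ B ^ (n - c) • ⊤ := by
  obtain ⟨c, artin_rees⟩ := Ideal.exists_pow_inf_eq_pow_smul B (x • (⊤ : Submodule R M))
  refine ⟨c, fun n z hz => ?_⟩
  rcases lt_or_ge n c with hn | hn
  · simp [Nat.sub_eq_zero_of_le hn.le]
  have hz' := Submodule.smul_mono_left (sup_pow_succ_le (Ideal.span {x}) B n) hz
  rw [Submodule.sup_smul, mul_smul, Submodule.ideal_span_singleton_smul] at hz'
  obtain ⟨_, ⟨w, hw, rfl⟩, v, hv, hwv⟩ := Submodule.mem_sup.1 hz'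
  have hvx : v = x • (z - w) := by
    rw [smul_sub, ← hwv]
    exact (add_sub_cancel_left _ _).symm
  have hv_inf : v ∈ B ^ (n + 1) • (⊤ : Submodule R M) ⊓ x • (⊤ : Submodule R M) :=
    ⟨hv, z - w, Submodule.mem_top, hvx.symm⟩
  rw [artin_rees (n + 1) (by omega)] at hv_inf
  have hv_smul := Submodule.smul_mono le_rfl inf_le_right hv_inf
  rw [← Submodule.ideal_span_singleton_smul, smul_comm, Submodule.ideal_span_singleton_smul]
    at hv_smul
  obtain ⟨y, hy, hyv⟩ := hv_smul
  obtain rfl : y = z - w := hx (hyv.trans hvx)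
  rw [← add_sub_cancel w z]
  exact Submodule.add_mem_sup hw (Submodule.smul_mono_left (Ideal.pow_le_pow_right (by omega)) hy)

theorem exists_hilbDefect_le {I : Ideal R} {d : ℕ} {b : Fin d → R}
    (hI : I = Ideal.span {x} ⊔ Ideal.span (Set.range b)) (hxI : x ∈ I) (hx : IsSMulRegular M x)
    (h : Module.length R (M ⧸ I • (⊤ : Submodule R M)) ≠ ⊤) :
    ∃ C c, ∀ n, hilbDefect M hxI n ≤ C * Nat.multichoose d (n - c) := by
  set B := Ideal.span (Set.range b)
  obtain ⟨c, hc⟩ := exists_forall_mem_sup_of_smul_mem hx B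
  rw [← hI] at hc
  refine ⟨hilbFn I M c, c, fun n => ?_⟩
  have ker_le : LinearMap.ker (mulQuot M hxI n) ≤
      (B ^ (n - c) • (⊤ : Submodule R M)).map (I ^ n • (⊤ : Submodule R M)).mkQ := by
    rintro ⟨z⟩ hz
    obtain ⟨u, hu, v, hv, rfl⟩ :=
      Submodule.mem_sup.1 (hc n z ((mk_mem_ker_mulQuot_iff hxI n z).1 hz))
    exact ⟨v, hv, (Submodule.Quotient.eq _).2 (by simpa using hu)⟩
  have pow_smul_le : B ^ (n - c) • I ^ c • (⊤ : Submodule R M) ≤ I ^ n • ⊤ := by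
    rw [← mul_smul]
    refine Submodule.smul_mono_left ?_
    calc B ^ (n - c) * I ^ c ≤ I ^ (n - c) * I ^ c :=
          Ideal.mul_mono_left (Ideal.pow_right_mono (hI ▸ le_sup_right) _)
      _ = I ^ (n - c + c) := (pow_add _ _ _).symm
      _ ≤ I ^ n := Ideal.pow_le_pow_right le_tsub_add
  have length_le := (length_mono ker_le).trans
    (length_map_mkQ_span_pow_smul_top_le b (n - c) _ _ pow_smul_le)
  rw [← coe_hilbDefect hxI h, ← coe_hilbFn h, mul_comm] at length_le
  exact_mod_cast length_le

end ColonBound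

/-! ### Hyperplane sections -/

section RegularElements

variable {R : Type u} [CommRing R] [IsLocalRing R] [IsNoetherianRing R] {M : Type u}
  [AddCommGroup M] [Module R M] [Module.Finite R M]

theorem exists_maximalIdeal_pow_le_annihilator (h : Module.length R M ≠ ⊤) :
    ∃ c, maximalIdeal R ^ c ≤ Module.annihilator R M := by
  have := (isFiniteLength_iff_isNoetherian_isArtinian.1 (Module.length_ne_top_iff.1 h)).2
  obtain ⟨c, stable⟩ := IsArtinian.monotone_stabilizes (R := R) (M := M)
    ⟨fun n => OrderDual.toDual (maximalIdeal R ^ n • ⊤), fun _ _ hab =>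
      Submodule.smul_mono_left (Ideal.pow_le_pow_right hab)⟩
  have pow_smul_top_eq : maximalIdeal R ^ c • (⊤ : Submodule R M) = maximalIdeal R ^ (c + 1) • ⊤ :=
    stable (c + 1) c.le_succ
  have pow_smul_top_eq_bot : maximalIdeal R ^ c • (⊤ : Submodule R M) = ⊥ :=
    Submodule.eq_bot_of_le_smul_of_le_jacobson_bot (maximalIdeal R) _ (IsNoetherian.noetherian _)
      (by rw [← mul_smul, ← pow_succ', ← pow_smul_top_eq]) (maximalIdeal_le_jacobson _)
  refine ⟨c, fun r hr => Module.mem_annihilator.2 fun z => ?_⟩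
  rw [← Submodule.mem_bot R, ← pow_smul_top_eq_bot]
  exact Submodule.smul_mem_smul hr trivial

theorem eq_maximalIdeal_of_mem_associatedPrimes {I p : Ideal R}
    (h : Module.length R (M ⧸ I • (⊤ : Submodule R M)) ≠ ⊤) (hp : p ∈ associatedPrimes R M)
    (hIp : I ≤ p) : p = maximalIdeal R := by
  have prime : p.IsPrime := hp.isPrime
  have annihilator_le : Module.annihilator R M ≤ p :=
    Submodule.annihilator_top (R := R) (M := M) ▸ IsAssociatedPrime.annihilator_le hp
  have mem_support : (⟨p, prime⟩ : PrimeSpectrum R) ∈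
      Module.support R (M ⧸ I • (⊤ : Submodule R M)) := by
    rw [Module.support_quotient, Module.support_eq_zeroLocus]
    exact ⟨annihilator_le, hIp⟩
  rw [Module.support_eq_zeroLocus] at mem_support
  obtain ⟨c, hc⟩ := exists_maximalIdeal_pow_le_annihilator h
  exact ((maximalIdeal.isMaximal R).eq_of_le prime.ne_top
    (prime.le_of_pow_le (hc.trans mem_support))).symm

theorem exists_mem_isSMulRegular_add {a : R} {B : Ideal R}
    (h : Module.length R (M ⧸ (Ideal.span {a} ⊔ B) • (⊤ : Submodule R M)) ≠ ⊤)
    (hM : maximalIdeal R ∉ associatedPrimes R M) : ∃ c ∈ B, IsSMulRegular M (a + c) := by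
  obtain ⟨c, hcB, hc⟩ := exists_mem_forall_add_notMem (a := a) (B := B)
    (associatedPrimes.finite R M) (fun p hp => hp.isPrime) fun p hp hap hBp => hM <|
      eq_maximalIdeal_of_mem_associatedPrimes h hp
        (sup_le ((Ideal.span_singleton_le_iff_mem p).2 hap) hBp) ▸ hp
  refine ⟨c, hcB, of_not_not fun not_regular => ?_⟩
  have mem_union : a + c ∈ ⋃ p ∈ associatedPrimes R M, (p : Set R) := by
    rw [biUnion_associatedPrimes_eq_compl_regular]
    exact not_regular
  obtain ⟨p, hp, mem_p⟩ := Set.mem_iUnion₂.1 mem_union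
  exact hc p hp mem_p

theorem exists_isSMulRegular_quotient_H0 {d : ℕ} (b : Fin (d + 1) → R)
    (h : Module.length R (M ⧸ Ideal.span (Set.range b) • (⊤ : Submodule R M)) ≠ ⊤) :
    ∃ x, IsSMulRegular (M ⧸ H0 R M) x ∧
      Ideal.span (Set.range b) = Ideal.span {x} ⊔ Ideal.span (Set.range (Fin.tail b)) := by
  have span_eq : Ideal.span (Set.range b) =
      Ideal.span {b 0} ⊔ Ideal.span (Set.range (Fin.tail b)) := by
    rw [Fin.range_fin_succ, Ideal.span_insert]
  have h' := length_quotient_smul_top_ne_top (H0 R M).mkQ_surjective h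
  rw [span_eq] at h' ⊢
  obtain ⟨c, hc, regular⟩ := exists_mem_isSMulRegular_add h'
    (maximalIdeal_notMem_associatedPrimes_quotient_H0 R M)
  refine ⟨b 0 + c, regular, le_antisymm ?_ ?_⟩ <;>
    refine sup_le ((Ideal.span_singleton_le_iff_mem _).2 ?_) le_sup_right
  · exact (Submodule.add_mem_iff_left _ (Ideal.mem_sup_right hc)).1
      (Ideal.mem_sup_left (Ideal.mem_span_singleton_self _))
  · exact Ideal.add_mem _ (Ideal.mem_sup_left (Ideal.mem_span_singleton_self _))
      (Ideal.mem_sup_right hc)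

end RegularElements

section HyperplaneSection

open scoped Pointwise

variable {R : Type u} [CommRing R] {M : Type u} [AddCommGroup M] [Module R M]

section

variable {I B : Ideal R} {x : R}

theorem smul_top_quotSMulTop (hI : I = Ideal.span {x} ⊔ B) :
    I • (⊤ : Submodule R (QuotSMulTop x M)) = B • ⊤ := by
  have : x • (⊤ : Submodule R (QuotSMulTop x M)) = ⊥ := by
    rw [← map_pointwise_smul_top _ (Submodule.mkQ_surjective _), Submodule.mkQ_map_self]
  rw [hI, Submodule.sup_smul, Submodule.ideal_span_singleton_smul, this, bot_sup_eq]

theorem pointwise_smul_top_le (hx : x ∈ I) : x • (⊤ : Submodule R M) ≤ I • ⊤ := by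
  rw [← Submodule.ideal_span_singleton_smul]
  exact Submodule.smul_mono_left ((Ideal.span_singleton_le_iff_mem I).2 hx)

theorem IsRelRegular.of_quotSMulTop (hx : x ∈ I) {as : List R} (has : ∀ a ∈ as, a ∈ I)
    (h : IsRelRegular (I • (⊤ : Submodule R (QuotSMulTop x M))) as ⊥) :
    IsRelRegular (I • (⊤ : Submodule R M)) as (x • ⊤) := by
  refine .of_map (Submodule.mkQ_surjective (x • ⊤)) (fun a ha => pointwise_smul_top_le (has a ha))
    (pointwise_smul_top_le hx) ?_ ?_
  · rw [Submodule.ker_mkQ]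
    exact inf_le_left
  · rwa [map_smul_top _ (Submodule.mkQ_surjective _), Submodule.mkQ_map_self]

theorem IsRelRegular.cons_of_quotient {W : Submodule R M}
    (hW : W ⊓ I • (⊤ : Submodule R M) = ⊥) (hx : x ∈ I) (regular : IsSMulRegular (M ⧸ W) x)
    {as : List R} (has : ∀ a ∈ as, a ∈ I)
    (h : IsRelRegular (I • (⊤ : Submodule R (M ⧸ W))) as (x • ⊤)) :
    IsRelRegular (I • (⊤ : Submodule R M)) (x :: as) ⊥ := by
  refine ⟨fun z hz hxz => ?_, ?_⟩
  · rw [← hW]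
    refine ⟨(Submodule.Quotient.mk_eq_zero W).1 (regular.right_eq_zero_of_smul ?_), hz⟩
    rw [← Submodule.Quotient.mk_smul, (Submodule.mem_bot R).1 hxz, Submodule.Quotient.mk_zero]
  · rw [bot_sup_eq]
    refine .of_map W.mkQ_surjective (fun a ha => pointwise_smul_top_le (has a ha))
      (pointwise_smul_top_le hx) ?_ ?_
    · rw [Submodule.ker_mkQ, hW]
      exact bot_le
    · rwa [map_smul_top _ W.mkQ_surjective, map_pointwise_smul_top _ W.mkQ_surjective]

theorem hilbDefect_eq_zero_of_isRelRegular (hx : x ∈ I) (regular : IsSMulRegular M x)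
    {as : List R} (hI : I = Ideal.span {x} ⊔ Ideal.ofList as)
    (h : IsRelRegular (I • (⊤ : Submodule R M)) as (x • ⊤)) (n : ℕ) : hilbDefect M hx n = 0 := by
  refine hilbDefect_eq_zero hx n fun z hz => ?_
  rw [← Submodule.ideal_span_singleton_smul] at h
  have smul_mem := smul_top_inf_pow_smul_top_le hI h n
    ⟨Submodule.smul_mem_smul (Ideal.mem_span_singleton_self x) trivial, hz⟩
  rw [Submodule.ideal_span_singleton_smul] at smul_mem
  obtain ⟨w, hw, smul_eq⟩ := smul_mem
  exact regular smul_eq ▸ hw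

end

variable [IsLocalRing R]

variable (M) in
/-- The quotient `M̄ / x M̄` of `M̄ = M / H⁰_m(M)`, on which the dimension drops by one when `x` is
a parameter regular on `M̄`. -/
abbrev HyperplaneSection (x : R) : Type u := QuotSMulTop x (M ⧸ H0 R M)

variable [IsNoetherianRing R] [Module.Finite R M] {x : R} {h : ℕ → ℕ}

theorem lcLength_hyperplaneSection_le (regular : IsSMulRegular (M ⧸ H0 R M) x) {d : ℕ}
    (hh : ∀ i < d + 1, lcLength (maximalIdeal R) i M ≤ h i) {i : ℕ} (hi : i < d) :
    lcLength (maximalIdeal R) i (HyperplaneSection M x) ≤ hyperplaneBound h i := by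
  have le_h (j) (hj : j < d + 1) : lcLength (maximalIdeal R) j (M ⧸ H0 R M) ≤ h j :=
    (lcLength_quotient_H0_le j).trans (hh j hj)
  refine (lcLength_quotSMulTop_le (maximalIdeal R) regular i).trans ?_
  cases i with
  | zero =>
    obtain ⟨y, hy, y_regular⟩ := exists_mem_maximalIdeal_isSMulRegular
      (maximalIdeal_notMem_associatedPrimes_quotient_H0 R M)
    rw [lcLength_zero_eq_zero_of_isSMulRegular hy y_regular, zero_add]
    exact le_h 1 (by omega)
  | succ i =>
    exact (add_le_add (le_h (i + 1) (by omega)) (le_h (i + 2) (by omega))).trans_eq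
      (Nat.cast_add _ _).symm

end HyperplaneSection

/-! ### The multiplicity bound and its equality case -/

section MultiplicityBound

open scoped Pointwise

variable {R : Type u} [CommRing R] {M : Type u} [AddCommGroup M] [Module R M]

theorem length_quotient_smul_top_add_length_inf (W : Submodule R M) (J : Ideal R) :
    Module.length R (M ⧸ J • (⊤ : Submodule R M)) +
        Module.length R (W ⊓ J • ⊤ : Submodule R M) =
      Module.length R W + Module.length R ((M ⧸ W) ⧸ J • (⊤ : Submodule R (M ⧸ W))) := by
  rw [length_quotient_smul_top W J, ← length_map_mkQ_add_length_inf W (J • ⊤), add_right_comm]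

/-- The lower bound `λ(M / I M) - ∑_{i < d} C(d - 1, i) h_i` for the multiplicity `e₀(I, M)`,
attained exactly when `I` is standard; the sum is written as a sum of Schenzel's sums. -/
def multiplicityBound (I : Ideal R) (M : Type u) [AddCommGroup M] [Module R M] (d : ℕ)
    (h : ℕ → ℕ) : ℤ :=
  hilbFn I M 1 - (∑ k ∈ Finset.range d, schenzelSum k h : ℕ)

/-- The multiplicity `e₀(I, M)` does not exceed `multiplicityBound I M d h`. -/
def AttainsMultiplicityBound (I : Ideal R) (M : Type u) [AddCommGroup M] [Module R M] (d : ℕ)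
    (h : ℕ → ℕ) : Prop :=
  ¬ LeadingCoeffGE d (hilbFn I M) (multiplicityBound I M d h + 1)

theorem hilbFn_bot_succ (n : ℕ) : hilbFn (⊥ : Ideal R) M (n + 1) = hilbFn (⊥ : Ideal R) M 1 := by
  rw [hilbFn, hilbFn, ← Ideal.zero_eq_bot, zero_pow n.succ_ne_zero, pow_one]

theorem schenzelPoly_zero_multiplicityBound (I : Ideal R) (h : ℕ → ℕ) (n : ℕ) :
    schenzelPoly 0 (multiplicityBound I M 0 h) h n = hilbFn I M 1 := by
  simp [schenzelPoly, multiplicityBound]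

variable [IsLocalRing R] {I : Ideal R} {x : R} {d : ℕ} {h : ℕ → ℕ}

theorem length_hyperplaneSection_ne_top {B : Ideal R} (hI : I = Ideal.span {x} ⊔ B)
    (hfin : Module.length R (M ⧸ I • (⊤ : Submodule R M)) ≠ ⊤) :
    Module.length R (HyperplaneSection M x ⧸
      B • (⊤ : Submodule R (HyperplaneSection M x))) ≠ ⊤ := by
  rw [← smul_top_quotSMulTop hI]
  exact length_quotient_smul_top_ne_top (Submodule.mkQ_surjective _)
    (length_quotient_smul_top_ne_top (H0 R M).mkQ_surjective hfin)

variable [IsNoetherianRing R]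

theorem hilbFn_one_add_length_inf (hx : x ∈ I)
    (hfin : Module.length R (M ⧸ I • (⊤ : Submodule R M)) ≠ ⊤) :
    (hilbFn I M 1 : ℕ∞) + Module.length R (H0 R M ⊓ I • ⊤ : Submodule R M) =
      Module.length R (H0 R M) + hilbFn I (HyperplaneSection M x) 1 := by
  have hfin' := length_quotient_smul_top_ne_top (H0 R M).mkQ_surjective hfin
  have hilbFn_quotient : hilbFn I (M ⧸ H0 R M) 1 = hilbFn I (HyperplaneSection M x) 1 := by
    have := hilbFn_succ_add_hilbDefect hx hfin' 0
    rwa [hilbDefect_eq_zero hx 0 (by simp), hilbFn_zero] at this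
  rw [← hilbFn_quotient, coe_hilbFn hfin, coe_hilbFn hfin', pow_one,
    length_quotient_smul_top_add_length_inf]

theorem multiplicityBound_hyperplaneSection {B : Ideal R} (hI : I = Ideal.span {x} ⊔ B)
    (hfin : Module.length R (M ⧸ I • (⊤ : Submodule R M)) ≠ ⊤)
    (hH0 : Module.length R (H0 R M) ≤ h 0) :
    ∃ s t : ℕ, Module.length R (H0 R M ⊓ I • ⊤ : Submodule R M) = s ∧
      Module.length R (H0 R M) + t = h 0 ∧
      multiplicityBound B (HyperplaneSection M x) d (hyperplaneBound h) =
        multiplicityBound I M (d + 1) h + s + t := by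
  have hx : x ∈ I := hI ▸ Ideal.mem_sup_left (Ideal.mem_span_singleton_self x)
  have inf_le_h : Module.length R (H0 R M ⊓ I • ⊤ : Submodule R M) ≤ h 0 :=
    (length_mono inf_le_left).trans hH0
  obtain ⟨l, hl⟩ := ENat.ne_top_iff_exists.1 (ne_top_of_le_ne_top (ENat.natCast_ne_top _) hH0)
  obtain ⟨s, hs⟩ := ENat.ne_top_iff_exists.1 (ne_top_of_le_ne_top (ENat.natCast_ne_top _) inf_le_h)
  have hilbFn_one := hilbFn_one_add_length_inf hx hfin
  rw [← hl, Nat.cast_le] at hH0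
  rw [← hl, ← hs] at hilbFn_one ⊢
  refine ⟨s, h 0 - l, rfl, mod_cast Nat.add_sub_cancel' hH0, ?_⟩
  rw [multiplicityBound, multiplicityBound, ← hilbFn_congr (smul_top_quotSMulTop hI),
    sum_schenzelSum_succ]
  have : hilbFn I M 1 + s = l + hilbFn I (HyperplaneSection M x) 1 := mod_cast hilbFn_one
  push_cast [hH0]
  linarith [(mod_cast this : (hilbFn I M 1 : ℤ) + s = l + hilbFn I (HyperplaneSection M x) 1)]

theorem hilbFn_succ_eq_of_hilbDefect_eq_zero (hx : x ∈ I)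
    (hfin : Module.length R (M ⧸ I • (⊤ : Submodule R M)) ≠ ⊤)
    (hH0 : H0 R M ⊓ I • ⊤ = ⊥) {l : ℕ} (hl : Module.length R (H0 R M) = l)
    (defect : ∀ n, hilbDefect (M ⧸ H0 R M) hx n = 0) (n : ℕ) :
    hilbFn I M (n + 1) =
      l + ∑ m ∈ Finset.range (n + 1), hilbFn I (HyperplaneSection M x) (m + 1) := by
  have hfin' := length_quotient_smul_top_ne_top (H0 R M).mkQ_surjective hfin
  have inf_eq_bot : H0 R M ⊓ I ^ (n + 1) • ⊤ = ⊥ := le_bot_iff.1 <| hH0 ▸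
    inf_le_inf_left _ (Submodule.smul_mono_left (Ideal.pow_le_self n.succ_ne_zero))
  have hilbFn_quotient : hilbFn I M (n + 1) = l + hilbFn I (M ⧸ H0 R M) (n + 1) := by
    have := length_quotient_smul_top_add_length_inf (H0 R M) (I ^ (n + 1))
    rw [inf_eq_bot, Module.length_bot, add_zero, hl, ← coe_hilbFn hfin, ← coe_hilbFn hfin'] at this
    exact_mod_cast this
  have telescoped := add_sum_eq_sum_of_add_eq hilbFn_zero (hilbFn_succ_add_hilbDefect hx hfin')
    (n + 1)
  simp only [defect, Finset.sum_const_zero, add_zero] at telescoped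
  rw [hilbFn_quotient, telescoped]

variable [Module.Finite R M]

theorem LeadingCoeffGE.of_hyperplaneSection {b : Fin d → R}
    (hI : I = Ideal.span {x} ⊔ Ideal.span (Set.range b))
    (hfin : Module.length R (M ⧸ I • (⊤ : Submodule R M)) ≠ ⊤)
    (regular : IsSMulRegular (M ⧸ H0 R M) x) {c : ℤ}
    (hc : LeadingCoeffGE d (hilbFn (Ideal.span (Set.range b)) (HyperplaneSection M x)) c) :
    LeadingCoeffGE (d + 1) (hilbFn I M) c := by
  have hx : x ∈ I := hI ▸ Ideal.mem_sup_left (Ideal.mem_span_singleton_self x)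
  have hfin' := length_quotient_smul_top_ne_top (H0 R M).mkQ_surjective hfin
  obtain ⟨C, c₀, defect_le⟩ := exists_hilbDefect_le hI hx regular hfin'
  rw [← hilbFn_congr (smul_top_quotSMulTop hI)] at hc
  refine (hc.succ hilbFn_zero (hilbFn_succ_add_hilbDefect hx hfin') defect_le).mono
    (fun n => ?_) le_rfl
  rw [← Nat.cast_le (α := ℕ∞), coe_hilbFn hfin, coe_hilbFn hfin',
    length_quotient_smul_top (H0 R M)]
  exact le_add_self

theorem leadingCoeffGE_multiplicityBound (b : Fin d → R)
    (hfin : Module.length R (M ⧸ Ideal.span (Set.range b) • (⊤ : Submodule R M)) ≠ ⊤)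
    (hh : ∀ i < d, lcLength (maximalIdeal R) i M ≤ h i) :
    LeadingCoeffGE d (hilbFn (Ideal.span (Set.range b)) M)
      (multiplicityBound (Ideal.span (Set.range b)) M d h) := by
  induction d generalizing M h with
  | zero =>
    refine ⟨0, fun n => ?_⟩
    simp [multiplicityBound, hilbFn_bot_succ n]
  | succ d ih =>
    obtain ⟨x, regular, hI⟩ := exists_isSMulRegular_quotient_H0 b hfin
    obtain ⟨s, t, -, -, bound_eq⟩ := multiplicityBound_hyperplaneSection (d := d) hI hfin
      ((length_H0_le M).trans (hh 0 d.succ_pos))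
    have bound_section := ih (Fin.tail b) (length_hyperplaneSection_ne_top hI hfin)
      fun i hi => lcLength_hyperplaneSection_le regular hh hi
    exact (bound_section.of_hyperplaneSection hI hfin regular).mono (fun _ => le_rfl) (by omega)

-- Any loss in the passage to the hyperplane section would improve the multiplicity bound.
theorem AttainsMultiplicityBound.hyperplaneSection_lossless {b : Fin d → R}
    (hI : I = Ideal.span {x} ⊔ Ideal.span (Set.range b))
    (hfin : Module.length R (M ⧸ I • (⊤ : Submodule R M)) ≠ ⊤)
    (regular : IsSMulRegular (M ⧸ H0 R M) x)
    (hh : ∀ i < d + 1, lcLength (maximalIdeal R) i M ≤ h i)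
    (attains : AttainsMultiplicityBound I M (d + 1) h) :
    H0 R M ⊓ I • ⊤ = ⊥ ∧ Module.length R (H0 R M) = h 0 ∧
      multiplicityBound (Ideal.span (Set.range b)) (HyperplaneSection M x) d (hyperplaneBound h) =
        multiplicityBound I M (d + 1) h := by
  obtain ⟨s, t, hs, ht, bound_eq⟩ := multiplicityBound_hyperplaneSection (d := d) hI hfin
    ((length_H0_le M).trans (hh 0 d.succ_pos))
  have bound_section := leadingCoeffGE_multiplicityBound b
    (length_hyperplaneSection_ne_top hI hfin)
    fun i hi => lcLength_hyperplaneSection_le regular hh hi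
  have no_loss : s + t = 0 := by
    by_contra loss
    exact attains <| (bound_section.of_hyperplaneSection hI hfin regular).mono
      (fun _ => le_rfl) (by omega)
  obtain ⟨rfl, rfl⟩ := Nat.add_eq_zero_iff.1 no_loss
  exact ⟨Submodule.subsingleton_iff_eq_bot.1 (Module.length_eq_zero_iff.1 hs),
    by simpa using ht, by simpa using bound_eq⟩

theorem AttainsMultiplicityBound.exists_isRelRegular_and_hilbFn_eq (b : Fin d → R)
    (hfin : Module.length R (M ⧸ Ideal.span (Set.range b) • (⊤ : Submodule R M)) ≠ ⊤)
    (hh : ∀ i < d, lcLength (maximalIdeal R) i M ≤ h i)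
    (attains : AttainsMultiplicityBound (Ideal.span (Set.range b)) M d h) :
    (∃ as, Ideal.span (Set.range b) = Ideal.ofList as ∧
      IsRelRegular (Ideal.span (Set.range b) • (⊤ : Submodule R M)) as ⊥) ∧
    ∀ n, (hilbFn (Ideal.span (Set.range b)) M (n + 1) : ℤ) =
      schenzelPoly d (multiplicityBound (Ideal.span (Set.range b)) M d h) h n := by
  induction d generalizing M h with
  | zero =>
    refine ⟨⟨[], by simp, trivial⟩, fun n => ?_⟩
    rw [schenzelPoly_zero_multiplicityBound]
    simp [hilbFn_bot_succ n]
  | succ d ih =>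
    obtain ⟨x, regular, hI⟩ := exists_isSMulRegular_quotient_H0 b hfin
    set I := Ideal.span (Set.range b)
    have hx : x ∈ I := hI ▸ Ideal.mem_sup_left (Ideal.mem_span_singleton_self x)
    obtain ⟨hH0, hl, bound_eq⟩ := attains.hyperplaneSection_lossless hI hfin regular hh
    obtain ⟨⟨as, has, relRegular⟩, hilbFn_section⟩ := ih (Fin.tail b)
      (length_hyperplaneSection_ne_top hI hfin)
      (fun i hi => lcLength_hyperplaneSection_le regular hh hi)
      fun ge => attains (bound_eq ▸ ge.of_hyperplaneSection hI hfin regular)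
    rw [← smul_top_quotSMulTop hI] at relRegular
    rw [← hilbFn_congr (smul_top_quotSMulTop hI), bound_eq] at hilbFn_section
    rw [has] at hI
    have as_mem (a) (ha : a ∈ as) : a ∈ I := hI ▸ Ideal.mem_sup_right (Ideal.subset_span ha)
    have relRegular_quotient := relRegular.of_quotSMulTop hx as_mem
    refine ⟨⟨x :: as, by rw [hI, Ideal.ofList_cons],
      relRegular_quotient.cons_of_quotient hH0 hx regular as_mem⟩, fun n => ?_⟩
    rw [hilbFn_succ_eq_of_hilbDefect_eq_zero hx hfin hH0 hl
      (hilbDefect_eq_zero_of_isRelRegular hx regular hI relRegular_quotient), schenzelPoly_succ]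
    push_cast
    simp only [hilbFn_section]

end MultiplicityBound

/-! ### Schenzel's formula -/

section SchenzelFormula

variable {R : Type u} [CommRing R] {M : Type u} [AddCommGroup M] [Module R M]

theorem mlen_eq_coe_iff {l : ℕ∞} : mlen R M = l ↔ Module.length R M = l := by
  rw [mlen, ← Module.coe_length, WithBot.coe_inj]

variable {I : Ideal R} {d : ℕ} {e : ℕ → ℤ} {h : ℕ → ℕ}

theorem eventually_hilbFn_succ_eq (he : HasHilbCoeffs R I M d e) :
    ∀ᶠ n in atTop, (hilbFn I M (n + 1) : ℤ) = ∑ k ∈ Finset.range (d + 1),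
      (-1) ^ (d - k) * e (d - k) * Nat.multichoose (k + 1) n := by
  obtain ⟨ℓ, hℓ, eventually_eq⟩ := he
  filter_upwards [(tendsto_add_atTop_nat 1).eventually eventually_eq] with n hn
  rw [hilbFn, mlen_eq_coe_iff.1 (hℓ (n + 1)), ENat.toNat_natCast, hn, hsPoly_succ]

variable [IsLocalRing R] [IsNoetherianRing R] [Module.Finite R M]

theorem hilbertCoeff_eq_schenzelSum (hpar : IsParameterIdeal R I d M)
    (hh : ∀ i < d, lcLength (maximalIdeal R) i M ≤ h i) (he : HasHilbCoeffs R I M d e)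
    (hstd : e 0 = multiplicityBound I M d h) {k : ℕ} (hk : k < d) :
    (-1) ^ (d - k) * e (d - k) = schenzelSum k h := by
  obtain ⟨⟨b, rfl⟩, mlen_lt⟩ := hpar
  have hfin : Module.length R (M ⧸ Ideal.span (Set.range b) • (⊤ : Submodule R M)) ≠ ⊤ :=
    fun length_eq => mlen_lt.ne (mlen_eq_coe_iff.2 length_eq)
  have eventually_eq := eventually_hilbFn_succ_eq he
  have attains : AttainsMultiplicityBound (Ideal.span (Set.range b)) M d h := by
    simpa [AttainsMultiplicityBound, ← hstd] using
      not_leadingCoeffGE_of_eventually_eq eventually_eq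
  have hilbFn_eq := (attains.exists_isRelRegular_and_hilbFn_eq b hfin hh).2
  rw [← sub_eq_zero]
  refine eq_zero_of_eventually_sum_mul_multichoose_eq_zero
    (a := fun k => (-1) ^ (d - k) * e (d - k) - schenzelSum k h) ?_ k hk
  filter_upwards [eventually_eq] with n hn
  rw [hilbFn_eq, schenzelPoly, ← hstd, Finset.sum_range_succ] at hn
  simp only [sub_mul, Finset.sum_sub_distrib]
  simp only [Nat.sub_self, pow_zero, one_mul] at hn
  linarith

theorem le_mdepth_iff_schenzelSum_eq_zero (hdepth : 1 ≤ mdepth R M)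
    (hh : ∀ i < d, lcLength (maximalIdeal R) i M = h i) {k : ℕ} (hk : k < d) :
    ((k + 1 : ℕ) : ℕ∞) ≤ mdepth R M ↔ schenzelSum k h = 0 := by
  have := nontrivial_of_one_le_mdepth hdepth
  have h_eq_zero_iff (j) (hj : j < d) : lcLength (maximalIdeal R) j M = 0 ↔ h j = 0 := by
    rw [hh j hj, Nat.cast_eq_zero]
  have h0 : h 0 = 0 :=
    (h_eq_zero_iff 0 (by omega)).1 (le_mdepth_iff.1 (by simpa using hdepth) 0 one_pos)
  rw [schenzelSum_eq_zero_iff h0, le_mdepth_iff]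
  exact forall₂_congr fun j hj => h_eq_zero_iff j (by omega)

end SchenzelFormula

/-! ### Depth of unmixed rings -/

section Unmixed

theorem mul_of_eq_zero_of_evalOneₐ_eq_zero {R : Type u} [CommRing R] {J : Ideal R} {x : R}
    (hx : ∀ r ∈ J, r • x = 0) {y : AdicCompletion J R} (hy : AdicCompletion.evalOneₐ J y = 0) :
    y * AdicCompletion.of J R x = 0 := by
  obtain ⟨y, rfl⟩ := AdicCompletion.mk_surjective J R y
  refine AdicCompletion.ext_evalₐ fun n => ?_
  rw [map_mul, map_zero, AdicCompletion.evalₐ_of, AdicCompletion.evalₐ_mk, ← map_mul]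
  rcases Nat.eq_zero_or_pos n with rfl | hn
  · exact Ideal.Quotient.eq_zero_iff_mem.2 (by simp)
  have val_one_mem : y.val 1 ∈ J := by
    rw [← AdicCompletion.factorₐ_evalₐ_one, AdicCompletion.evalₐ_mk,
      Ideal.Quotient.factor_mk] at hy
    exact Ideal.Quotient.eq_zero_iff_mem.1 hy
  have sub_mem : y.val 1 - y.val n ∈ J := by
    simpa using SModEq.sub_mem.1 (y.property (show 1 ≤ n from hn))
  have val_mem : y.val n ∈ J := (Submodule.sub_mem_iff_right J val_one_mem).1 sub_mem
  rw [← smul_eq_mul, hx _ val_mem, map_zero]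

theorem ker_evalOneₐ_mem_associatedPrimes {R : Type u} [CommRing R] {J : Ideal R} [J.IsMaximal]
    [IsHausdorff J R] {x : R} (hx : ∀ r ∈ J, r • x = 0) (x_ne_zero : x ≠ 0) :
    RingHom.ker (AdicCompletion.evalOneₐ J) ∈
      associatedPrimes (AdicCompletion J R) (AdicCompletion J R) := by
  let : Field (R ⧸ J) := Ideal.Quotient.field J
  have maximal : (RingHom.ker (AdicCompletion.evalOneₐ J)).IsMaximal :=
    RingHom.ker_isMaximal_of_surjective _ (AdicCompletion.evalOneₐ_surjective J)
  have of_ne_zero : AdicCompletion.of J R x ≠ 0 := fun of_eq_zero =>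
    x_ne_zero (AdicCompletion.of_injective J R (of_eq_zero.trans (map_zero _).symm))
  have ker_eq_colon : RingHom.ker (AdicCompletion.evalOneₐ J) =
      (⊥ : Submodule (AdicCompletion J R) (AdicCompletion J R)).colon
        {AdicCompletion.of J R x} := by
    refine maximal.eq_of_le ?_ fun y hy => ?_
    · rw [Ne, Ideal.eq_top_iff_one, Submodule.mem_colon_singleton, one_smul]
      exact of_ne_zero
    · exact Submodule.mem_colon_singleton.2 (mul_of_eq_zero_of_evalOneₐ_eq_zero hx hy)
  exact ⟨maximal.isPrime, AdicCompletion.of J R x,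
    ker_eq_colon ▸ maximal.isPrime.radical.symm⟩

theorem one_le_mdepth_of_unmixed {R : Type u} [CommRing R] [IsLocalRing R] [IsNoetherianRing R]
    (hR : Unmixed R) (dim_ne_zero : ringKrullDim R ≠ 0) : 1 ≤ mdepth R R := by
  refine one_le_mdepth_of_maximalIdeal_notMem_associatedPrimes <|
    maximalIdeal_notMem_associatedPrimes_of_socle_eq_zero fun x hx => ?_
  by_contra x_ne_zero
  have dim_eq := hR _ (ker_evalOneₐ_mem_associatedPrimes hx x_ne_zero)
  let : Field (R ⧸ maximalIdeal R) := Ideal.Quotient.field _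
  let residueEquiv := Ideal.quotientKerAlgEquivOfSurjective
    (AdicCompletion.evalOneₐ_surjective (maximalIdeal R))
  rw [ringKrullDim_eq_of_ringEquiv residueEquiv.toRingEquiv,
    ringKrullDim_eq_zero_of_field] at dim_eq
  exact dim_ne_zero dim_eq.symm

end Unmixed

end HilbertCoefficients

end

open HilbertCoefficients

theorem stmt_11_general (R : Type u) [CommRing R] [IsLocalRing R] [IsNoetherianRing R]
    (M : Type u) [AddCommGroup M] [Module R M] [Module.Finite R M] (hdepth : 1 ≤ mdepth R M)
    (d : ℕ) (h : ℕ → ℕ)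
    (hh : ∀ i, i < d → mlen R (lcoh R i M) = ((h i : ℕ∞) : WithBot ℕ∞))
    (I : Ideal R) (hpar : IsParameterIdeal R I d M)
    (e : ℕ → ℤ) (he : HasHilbCoeffs R I M d e)
    (l1 : ℕ) (hl1 : mlen R (M ⧸ (I • (⊤ : Submodule R M))) = ((l1 : ℕ∞) : WithBot ℕ∞))
    (hstd : (l1 : ℤ) - e 0 = ∑ i ∈ Finset.range d, ((d - 1).choose i : ℤ) * (h i : ℤ)) :
    ∀ i, 1 ≤ i → i ≤ d → (((d - i + 1 : ℕ) : ℕ∞) ≤ mdepth R M ↔ e i = 0) := by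
  intro i hi hid
  have lcLength_eq (j) (hj : j < d) : lcLength (maximalIdeal R) j M = h j :=
    WithBot.coe_injective ((mlen_lcoh j M).symm.trans (hh j hj))
  have multiplicity_eq : e 0 = multiplicityBound I M d h := by
    rw [multiplicityBound, ← sum_choose_mul_eq_sum_schenzelSum, hilbFn, pow_one,
      mlen_eq_coe_iff.1 hl1, ENat.toNat_natCast]
    push_cast
    linarith
  have schenzel : (-1) ^ i * e i = schenzelSum (d - i) h := by
    simpa only [Nat.sub_sub_self hid] using hilbertCoeff_eq_schenzelSum hpar
      (fun j hj => (lcLength_eq j hj).le) he multiplicity_eq (show d - i < d by omega)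
  rw [le_mdepth_iff_schenzelSum_eq_zero hdepth lcLength_eq (by omega), ← Nat.cast_eq_zero (R := ℤ),
    ← schenzel]
  simp

/-- In an unmixed generalized Cohen–Macaulay local ring of dimension `d > 0` with a standard
parameter ideal `I`, for each `1 ≤ i ≤ d`: `depth R ≥ d - i + 1` iff `eᵢ(I) = 0`. -/
theorem stmt_11 (R : Type u) [CommRing R] [IsLocalRing R] [IsNoetherianRing R]
    (hunm : Unmixed R)
    (d : ℕ) (hd0 : 0 < d) (hd : ringKrullDim R = ((d : ℕ∞) : WithBot ℕ∞))
    (h : ℕ → ℕ)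
    (hh : ∀ i, i < d → mlen R (lcoh R i R) = ((h i : ℕ∞) : WithBot ℕ∞))
    (I : Ideal R) (hpar : IsParameterIdeal R I d R)
    (e : ℕ → ℤ) (he : HasHilbCoeffs R I R d e)
    (l1 : ℕ) (hl1 : mlen R (R ⧸ (I • (⊤ : Submodule R R))) = ((l1 : ℕ∞) : WithBot ℕ∞))
    (hstd : (l1 : ℤ) - e 0 = ∑ i ∈ Finset.range d, ((d - 1).choose i : ℤ) * (h i : ℤ)) :
    ∀ i, 1 ≤ i → i ≤ d →
      (((d - i + 1 : ℕ) : ℕ∞) ≤ mdepth R R ↔ e i = 0) := by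
  have dim_ne_zero : ringKrullDim R ≠ 0 := by
    rw [hd]
    exact_mod_cast hd0.ne'
  exact stmt_11_general R R (one_le_mdepth_of_unmixed hunm dim_ne_zero) d h hh I hpar e he l1 hl1
    hstd
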